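/- arXiv:1112.6160 — 14 statements merged into one kernel-verified Lean document; each statement's English description precedes it below -/
import Mathlib

section
/- Let E be a finite-dimensional real inner product space with dim E ≥ 2, let w and w' be unit vectors in E, and let α, β' ∈ [0, π/2]. Then {v ∈ E : ‖v‖ = 1 ∧ angle(v, w') ≤ β'} ⊆ {v ∈ E : ‖v‖ = 1 ∧ angle(v, w) ≤ α} if and only if angle(w, w') ≤ α − β'. -/
open Real InnerProductGeometry

theorem aux_perp {E : Type*} [NormedAddCommGroup E] [InnerProductSpace ℝ E]
    [FiniteDimensional ℝ E] (hdim : 2 ≤ Module.finrank ℝ E) (w : E) :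
    ∃ u : E, ‖u‖ = 1 ∧ inner ℝ w u = 0 := by
  have hne : (Submodule.span ℝ {w})ᗮ ≠ ⊥ := by
    intro h
    rw [Submodule.orthogonal_eq_bot_iff] at h
    have h1 := finrank_span_le_card (R := ℝ) ({w} : Set E)
    rw [h, finrank_top] at h1
    simp at h1
    omega
  obtain ⟨x, hx, hx0⟩ := Submodule.exists_mem_ne_zero_of_ne_bot hne
  rw [Submodule.mem_orthogonal_singleton_iff_inner_right] at hx
  refine ⟨(‖x‖⁻¹ : ℝ) • x, ?_, ?_⟩
  · rw [norm_smul, norm_inv, norm_norm, inv_mul_cancel₀ (norm_ne_zero_iff.mpr hx0)]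
  · rw [inner_smul_right, hx, mul_zero]

theorem aux_decomp {E : Type*} [NormedAddCommGroup E] [InnerProductSpace ℝ E]
    [FiniteDimensional ℝ E] (hdim : 2 ≤ Module.finrank ℝ E)
    (w w' : E) (hw : ‖w‖ = 1) (hw' : ‖w'‖ = 1) (hle : angle w w' ≤ π / 2) :
    ∃ u : E, ‖u‖ = 1 ∧ inner ℝ w' u = 0 ∧
      w = cos (angle w w') • w' - sin (angle w w') • u := by
  have hc : inner ℝ w w' = cos (angle w w') := inner_eq_cos_angle_of_norm_eq_one hw hw'
  have hc' : inner ℝ w' w = cos (angle w w') := by rw [real_inner_comm, hc]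
  have h1 : inner ℝ w w = (1 : ℝ) := by rw [real_inner_self_eq_norm_sq, hw]; norm_num
  have h2 : inner ℝ w' w' = (1 : ℝ) := by rw [real_inner_self_eq_norm_sq, hw']; norm_num
  have hsc := sin_sq_add_cos_sq (angle w w')
  rcases (angle_nonneg w w').eq_or_lt with h0 | h0
  · have he := eq_of_angle_eq_zero_of_norm_eq h0.symm (hw.trans hw'.symm)
    obtain ⟨u, hu, hp⟩ := aux_perp hdim w'
    refine ⟨u, hu, hp, ?_⟩
    rw [← h0]; simp [he]
  · have hs : 0 < sin (angle w w') := sin_pos_of_pos_of_lt_pi h0 (by linarith [pi_pos])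
    generalize cos (angle w w') = c at *
    generalize sin (angle w w') = s at *
    refine ⟨s⁻¹ • (c • w' - w), ?_, ?_, ?_⟩
    · have : ‖c • w' - w‖ ^ 2 = s ^ 2 := by
        rw [← real_inner_self_eq_norm_sq]
        simp only [inner_sub_left, inner_sub_right, inner_smul_left, inner_smul_right, hc, hc', h1, h2]
        simp
        nlinarith
      have h3 : ‖c • w' - w‖ = s := by
        rwa [sq_eq_sq₀ (norm_nonneg _) hs.le] at this
      rw [norm_smul, h3, norm_inv, Real.norm_of_nonneg hs.le, inv_mul_cancel₀ hs.ne']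
    · simp [inner_sub_right, inner_smul_right, hc', hw']
    · rw [smul_inv_smul₀ hs.ne']; abel

/-- The closed spherical cap `C(w', β')` is contained in the cap `C(w, α)` if and only if
`angle(w, w') ≤ α − β'`. -/
theorem stmt1 {E : Type*} [NormedAddCommGroup E] [InnerProductSpace ℝ E]
    [FiniteDimensional ℝ E] (hdim : 2 ≤ Module.finrank ℝ E)
    (w w' : E) (hw : ‖w‖ = 1) (hw' : ‖w'‖ = 1)
    (α β' : ℝ) (hα : α ∈ Set.Icc 0 (π / 2)) (hβ' : β' ∈ Set.Icc 0 (π / 2)) :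
    {v : E | ‖v‖ = 1 ∧ InnerProductGeometry.angle v w' ≤ β'} ⊆
      {v : E | ‖v‖ = 1 ∧ InnerProductGeometry.angle v w ≤ α} ↔
    InnerProductGeometry.angle w w' ≤ α - β' := by
  obtain ⟨ha0, ha1⟩ := hα
  obtain ⟨hb0, hb1⟩ := hβ'
  constructor
  · intro h
    have hw0 : w' ≠ 0 := by
      rintro rfl
      simp at hw'
    have hθ : angle w w' ≤ α := by
      rw [angle_comm]
      exact (h ⟨hw', by rw [angle_self hw0]; exact hb0⟩).2
    obtain ⟨u, hu, hp, hd⟩ := aux_decomp hdim w w' hw hw' (hθ.trans ha1)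
    have hp' : inner ℝ u w' = 0 := by rw [real_inner_comm, hp]
    have h1 : inner ℝ u u = (1 : ℝ) := by rw [real_inner_self_eq_norm_sq, hu]; norm_num
    have h2 : inner ℝ w' w' = (1 : ℝ) := by rw [real_inner_self_eq_norm_sq, hw']; norm_num
    have hv : ‖cos β' • w' + sin β' • u‖ = 1 := by
      have : ‖cos β' • w' + sin β' • u‖ ^ 2 = 1 := by
        rw [← real_inner_self_eq_norm_sq]
        simp only [inner_add_left, inner_add_right, real_inner_smul_left, real_inner_smul_right,
          hp, hp', h1, h2]
        nlinarith [sin_sq_add_cos_sq β']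
      nlinarith [norm_nonneg (cos β' • w' + sin β' • u)]
    have hvw' : angle (cos β' • w' + sin β' • u) w' = β' := by
      rw [angle, hv, hw', inner_add_left, real_inner_smul_left, real_inner_smul_left, hp', h2]
      simp only [mul_one, mul_zero, add_zero, div_one]
      exact arccos_cos hb0 (by linarith)
    have hvw : angle (cos β' • w' + sin β' • u) w = angle w w' + β' := by
      have hi : inner ℝ (cos β' • w' + sin β' • u) w = cos (angle w w' + β') := by
        conv_lhs => rw [hd]
        simp only [inner_add_left, inner_sub_right, real_inner_smul_left, real_inner_smul_right,
          hp, hp', h1, h2, cos_add]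
        ring
      rw [angle, hv, hw, hi, mul_one, div_one]
      exact arccos_cos (add_nonneg (angle_nonneg _ _) hb0) (by linarith)
    have := (h ⟨hv, hvw'.le⟩).2
    rw [hvw] at this
    linarith
  · rintro h v ⟨hv, hvb⟩
    refine ⟨hv, ?_⟩
    have := angle_le_angle_add_angle v w' w
    rw [angle_comm w' w] at this
    linarith
end

section
/- Let E be a finite-dimensional real inner product space, let 0 < δ < r/2, and let K, L ⊆ E be nonempty compact sets with hausdorffDist K L ≤ δ. Suppose that for every x in the annulus K_[r−δ, r+δ] there are a unit vector w_x and an angle β_x ∈ [0, π/2) such that (w_x, β_x) is an r-spanning cone for K_δ from x. Let X : E → E be C^∞ (ContDiff ℝ ⊤ X) with ‖X x‖ = 1 and angle(X x, w_x) < π/2 − β_x for all x ∈ K_[r−δ, r+δ]. Then there exists a deformation retraction of L_r onto K_{r−δ}. -/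
open Real InnerProductGeometry Metric

theorem aux_descent {E : Type*} [NormedAddCommGroup E] [InnerProductSpace ℝ E]
    [FiniteDimensional ℝ E] (X : E → E) (hX : Continuous X) (A M : Set E)
    (hA : IsCompact A) (hM : IsCompact M) (hMne : M.Nonempty)
    (hn : ∀ x ∈ A, ‖X x‖ = 1)
    (hpos : ∀ x ∈ A, ∀ p ∈ M, dist x p = infDist x M → 0 < inner ℝ (X x) (p - x)) :
    ∃ s > 0, ∃ c > 0, ∀ x ∈ A, ∀ t t' : ℝ, 0 ≤ t → t ≤ t' → t' ≤ s →
      infDist (x + t' • X x) M ^ 2 ≤ infDist (x + t • X x) M ^ 2 - c * (t' - t) := by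
  have hc : Continuous fun q : E × ℝ × E => inner ℝ (X q.1) (q.2.2 - (q.1 + q.2.1 • X q.1)) := by
    fun_prop
  have hd : Continuous fun q : E × ℝ × E =>
      dist (q.1 + q.2.1 • X q.1) q.2.2 - infDist (q.1 + q.2.1 • X q.1) M := by
    refine Continuous.sub (by fun_prop) ((continuous_infDist_pt M).comp (by fun_prop))
  -- first: uniform time on which the inner product stays positive
  have h1 : ∃ s > 0, s ≤ 1 ∧ ∀ x ∈ A, ∀ t ∈ Set.Icc (0:ℝ) s, ∀ p ∈ M,
      dist (x + t • X x) p = infDist (x + t • X x) M →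
      0 < inner ℝ (X x) (p - (x + t • X x)) := by
    let C : Set (E × ℝ × E) := (A ×ˢ (Set.Icc (0:ℝ) 1 ×ˢ M)) ∩
      ({q | dist (q.1 + q.2.1 • X q.1) q.2.2 - infDist (q.1 + q.2.1 • X q.1) M = 0} ∩
       {q | inner ℝ (X q.1) (q.2.2 - (q.1 + q.2.1 • X q.1)) ≤ 0})
    have hC : IsCompact C := (hA.prod (isCompact_Icc.prod hM)).inter_right
      ((isClosed_eq hd continuous_const).inter (isClosed_le hc continuous_const))
    rcases C.eq_empty_or_nonempty with he | hne
    · refine ⟨1, one_pos, le_rfl, fun x hx t ht p hp h => ?_⟩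
      by_contra hcon
      have : (x, t, p) ∈ C := ⟨⟨hx, ht, hp⟩, sub_eq_zero.2 h, not_lt.1 hcon⟩
      rw [he] at this; exact this
    · obtain ⟨⟨x0, t0, p0⟩, h0, hmin⟩ := hC.exists_isMinOn hne
        (f := fun q => q.2.1) (by fun_prop)
      have ht0 : 0 < t0 := by
        rcases lt_or_eq_of_le h0.1.2.1.1 with h | h
        · exact h
        · exfalso
          simp only at h
          subst h
          obtain ⟨⟨a, b, d⟩, e, f⟩ := h0
          simp only [Set.mem_ofPred_eq, zero_smul, add_zero] at a d e f
          exact absurd (hpos x0 a p0 d (sub_eq_zero.1 e)) (not_lt.2 f)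
      have ht1 : t0 ≤ 1 := h0.1.2.1.2
      refine ⟨t0 / 2, by positivity, by linarith, fun x hx t ht p hp h => ?_⟩
      by_contra hcon
      have : (x, t, p) ∈ C :=
        ⟨⟨hx, ⟨ht.1, by linarith [ht.2]⟩, hp⟩, sub_eq_zero.2 h, not_lt.1 hcon⟩
      have := isMinOn_iff.1 hmin _ this
      simp only at this
      linarith [ht.2]
  obtain ⟨s, hs, hs1, hsp⟩ := h1
  have h2 : ∃ c > 0, ∀ x ∈ A, ∀ t ∈ Set.Icc (0:ℝ) s, ∀ p ∈ M,
      dist (x + t • X x) p = infDist (x + t • X x) M →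
      c ≤ inner ℝ (X x) (p - (x + t • X x)) := by
    let C : Set (E × ℝ × E) := (A ×ˢ (Set.Icc (0:ℝ) s ×ˢ M)) ∩
      {q | dist (q.1 + q.2.1 • X q.1) q.2.2 - infDist (q.1 + q.2.1 • X q.1) M = 0}
    have hC : IsCompact C := (hA.prod (isCompact_Icc.prod hM)).inter_right
      (isClosed_eq hd continuous_const)
    rcases C.eq_empty_or_nonempty with he | hne
    · refine ⟨1, one_pos, fun x hx t ht p hp h => ?_⟩
      have : (x, t, p) ∈ C := ⟨⟨hx, ht, hp⟩, sub_eq_zero.2 h⟩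
      rw [he] at this; exact this.elim
    · obtain ⟨⟨x0, t0, p0⟩, h0, hmin⟩ := hC.exists_isMinOn hne hc.continuousOn
      refine ⟨_, hsp x0 h0.1.1 t0 h0.1.2.1 p0 h0.1.2.2 (sub_eq_zero.1 h0.2),
        fun x hx t ht p hp h => ?_⟩
      exact isMinOn_iff.1 hmin (x, t, p) ⟨⟨hx, ht, hp⟩, sub_eq_zero.2 h⟩
  obtain ⟨c, hc0, hcp⟩ := h2
  refine ⟨min s c, lt_min hs hc0, c, hc0, fun x hx t t' ht htt ht' => ?_⟩
  have hts : t' ≤ s := ht'.trans (min_le_left _ _)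
  have htc : t' ≤ c := ht'.trans (min_le_right _ _)
  obtain ⟨p, hp, hpd⟩ := hM.exists_infDist_eq_dist hMne (x + t • X x)
  have h3 := hcp x hx t ⟨ht, htt.trans hts⟩ p hp hpd.symm
  have h4 : infDist (x + t' • X x) M ≤ ‖(p - (x + t • X x)) - (t' - t) • X x‖ := by
    refine (infDist_le_dist_of_mem hp).trans (le_of_eq ?_)
    rw [dist_comm, dist_eq_norm]; congr 1; module
  have h5 : infDist (x + t' • X x) M ^ 2 ≤ _ := pow_le_pow_left₀ infDist_nonneg h4 2
  rw [norm_sub_sq_real, real_inner_smul_right, norm_smul, hn x hx, real_inner_comm,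
    Real.norm_of_nonneg (by linarith), ← dist_eq_norm, dist_comm, ← hpd] at h5
  nlinarith [mul_le_mul_of_nonneg_left h3 (sub_nonneg.2 htt),
    mul_nonneg (sub_nonneg.2 htt) (by linarith : 0 ≤ c - (t' - t))]

/-- one step of the deformation -/
theorem aux_step {E : Type*} [NormedAddCommGroup E] [InnerProductSpace ℝ E]
    (X : E → E) (hX : Continuous X) (K B : Set E) (ρ s c : ℝ) (hs : 0 < s) (hc : 0 < c)
    (hρ : 0 < ρ)
    (hK : ∀ x ∈ B, ρ ≤ infDist x K → ∀ t t' : ℝ, 0 ≤ t → t ≤ t' → t' ≤ s →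
      infDist (x + t' • X x) K ^ 2 ≤ infDist (x + t • X x) K ^ 2 - c * (t' - t))
    (hB : ∀ x ∈ B, ρ ≤ infDist x K → ∀ t : ℝ, 0 ≤ t → t ≤ s → x + t • X x ∈ B) :
    ∃ S : ℝ × E → E, ContinuousOn S (Set.Icc (0:ℝ) 1 ×ˢ B) ∧
      (∀ x, S (0, x) = x) ∧
      (∀ x ∈ B, ∀ t ∈ Set.Icc (0:ℝ) 1, S (t, x) ∈ B) ∧
      (∀ x ∈ B, infDist x K ≤ ρ → ∀ t, S (t, x) = x) ∧
      (∀ x ∈ B, infDist (S (1, x)) K ^ 2 ≤ max (ρ ^ 2) (infDist x K ^ 2 - c * s)) := by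
  have hm : Continuous fun q : ℝ × E => infDist (q.2 + q.1 • X q.2) K :=
    (continuous_infDist_pt K).comp (by fun_prop)
  have key : ∀ x : E, ∃ τ : ℝ, x ∈ B → τ ∈ Set.Icc 0 s ∧ (infDist x K ≤ ρ → τ = 0) ∧
      (ρ < infDist x K → (∀ t, 0 ≤ t → t < τ → ρ < infDist (x + t • X x) K) ∧
        (∀ t, t ≤ s → τ < t → infDist (x + t • X x) K < ρ)) ∧
      (τ = s ∨ infDist (x + τ • X x) K ≤ ρ) := by
    intro x
    by_cases hx : x ∈ B
    swap
    · exact ⟨0, fun h => absurd h hx⟩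
    by_cases h0 : infDist x K ≤ ρ
    · exact ⟨0, fun _ => ⟨⟨le_rfl, hs.le⟩, fun _ => rfl, fun h => absurd h (not_lt.2 h0),
        Or.inr (by simpa using h0)⟩⟩
    push Not at h0
    have anti : ∀ t t' : ℝ, 0 ≤ t → t < t' → t' ≤ s →
        infDist (x + t' • X x) K < infDist (x + t • X x) K := by
      intro t t' a b d
      have := hK x hx h0.le t t' a b.le d
      refine lt_of_pow_lt_pow_left₀ 2 infDist_nonneg ?_
      nlinarith [mul_pos hc (sub_pos.2 b)]
    by_cases h1 : ρ ≤ infDist (x + s • X x) K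
    · refine ⟨s, fun _ => ⟨⟨hs.le, le_rfl⟩, fun h => absurd h (not_le.2 h0), fun _ => ⟨?_, ?_⟩,
        Or.inl rfl⟩⟩
      · intro t a b; exact h1.trans_lt (anti t s a b le_rfl)
      · intro t a b; linarith
    · push Not at h1
      have hcont : ContinuousOn (fun t : ℝ => infDist (x + t • X x) K) (Set.Icc 0 s) :=
        ((continuous_infDist_pt K).comp (by fun_prop)).continuousOn
      obtain ⟨τ, hτ, hτe⟩ := intermediate_value_Icc' hs.le hcont
        (show ρ ∈ Set.Icc _ _ from ⟨h1.le, by simpa using h0.le⟩)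
      simp only at hτe
      refine ⟨τ, fun _ => ⟨hτ, fun h => absurd h (not_le.2 h0), fun _ => ⟨?_, ?_⟩,
        Or.inr hτe.le⟩⟩
      · intro t a b; rw [← hτe]; exact anti t τ a b hτ.2
      · intro t a b; rw [← hτe]; exact anti τ t hτ.1 b a
  choose τ hτ using key
  have hτc : ContinuousOn τ B := by
    intro x hx
    obtain ⟨hr, hz, hbt, _⟩ := hτ x hx
    refine tendsto_order.2 ⟨fun a ha => ?_, fun b hb => ?_⟩
    · rcases lt_or_ge a 0 with h | h
      · filter_upwards [self_mem_nhdsWithin] with y hy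
        exact h.trans_le (hτ y hy).1.1
      · have h0 : ρ < infDist x K := by
          by_contra hcon
          have := hz (not_lt.1 hcon)
          linarith
        obtain ⟨a', h1, h2⟩ := exists_between ha
        have e1 := (hbt h0).1 a' (h.trans h1.le) h2
        have c1 : Continuous fun y => infDist (y + a' • X y) K :=
          (continuous_infDist_pt K).comp (by fun_prop)
        have m1 := (c1.tendsto x).eventually (lt_mem_nhds e1)
        have m2 := ((continuous_infDist_pt K).tendsto x).eventually (lt_mem_nhds h0)
        filter_upwards [self_mem_nhdsWithin, nhdsWithin_le_nhds m1, nhdsWithin_le_nhds m2]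
          with y hy y1 y2
        by_contra hcon
        have := ((hτ y hy).2.2.1 y2).2 a' (h2.le.trans hr.2) (by linarith)
        linarith
    · rcases lt_or_ge s b with h | h
      · filter_upwards [self_mem_nhdsWithin] with y hy
        exact (hτ y hy).1.2.trans_lt h
      · obtain ⟨b', h1, h2⟩ := exists_between hb
        rcases lt_or_ge (infDist x K) ρ with hlt | hge
        · have m2 := ((continuous_infDist_pt K).tendsto x).eventually (gt_mem_nhds hlt)
          filter_upwards [self_mem_nhdsWithin, nhdsWithin_le_nhds m2] with y hy y2
          rw [(hτ y hy).2.1 (le_of_lt y2)]; exact hr.1.trans_lt hb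
        have e1 : infDist (x + b' • X x) K < ρ := by
          rcases lt_or_eq_of_le hge with h0 | h0
          · exact (hbt h0).2 b' (h2.le.trans h) h1
          · have hb0 : 0 < b' := hr.1.trans_lt h1
            have := hK x hx hge 0 b' le_rfl hb0.le (h2.le.trans h)
            rw [zero_smul, add_zero, ← h0] at this
            refine lt_of_pow_lt_pow_left₀ 2 hρ.le ?_
            nlinarith [mul_pos hc hb0]
        have c1 : Continuous fun y => infDist (y + b' • X y) K :=
          (continuous_infDist_pt K).comp (by fun_prop)
        have m1 := (c1.tendsto x).eventually (gt_mem_nhds e1)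
        filter_upwards [self_mem_nhdsWithin, nhdsWithin_le_nhds m1]
          with y hy y1
        rcases lt_or_ge ρ (infDist y K) with h0 | h0
        · by_contra hcon
          have := ((hτ y hy).2.2.1 h0).1 b' (hr.1.trans h1.le) (by linarith)
          linarith
        · rw [(hτ y hy).2.1 h0]; exact hr.1.trans_lt hb
  refine ⟨fun q => q.2 + (q.1 * τ q.2) • X q.2, ?_, ?_, ?_, ?_, ?_⟩
  · have : ContinuousOn (fun q : ℝ × E => τ q.2) (Set.Icc (0:ℝ) 1 ×ˢ B) :=
      hτc.comp continuousOn_snd fun q hq => hq.2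
    have h2 : Continuous fun q : ℝ × E => X q.2 := by fun_prop
    exact continuousOn_snd.add ((continuousOn_fst.mul this).smul h2.continuousOn)
  · intro x; simp
  · intro x hx t ht
    obtain ⟨hr, hz, -, -⟩ := hτ x hx
    rcases le_or_gt ρ (infDist x K) with h0 | h0
    · exact hB x hx h0 _ (mul_nonneg ht.1 hr.1) (by nlinarith [ht.1, ht.2, hr.1, hr.2])
    · simpa [hz h0.le] using hx
  · intro x hx h t
    simp [(hτ x hx).2.1 h]
  · intro x hx
    obtain ⟨hr, hz, -, h3⟩ := hτ x hx
    simp only [one_mul]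
    rcases h3 with h3 | h3
    · rcases le_or_gt ρ (infDist x K) with h0 | h0
      · have := hK x hx h0 0 s le_rfl hs.le le_rfl
        rw [h3]
        refine le_max_of_le_right ?_
        simpa using this
      · have := hz h0.le
        linarith
    · exact le_max_of_le_left (pow_le_pow_left₀ infDist_nonneg h3 2)

theorem aux_iter {E : Type*} [NormedAddCommGroup E] 
    (K B : Set E) (ρ e : ℝ) (S : ℝ × E → E) (hS : ContinuousOn S (Set.Icc (0:ℝ) 1 ×ˢ B))
    (S0 : ∀ x, S (0, x) = x)
    (SB : ∀ x ∈ B, ∀ t ∈ Set.Icc (0:ℝ) 1, S (t, x) ∈ B)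
    (Sf : ∀ x ∈ B, infDist x K ≤ ρ → ∀ t, S (t, x) = x)
    (S1 : ∀ x ∈ B, infDist (S (1, x)) K ^ 2 ≤ max (ρ ^ 2) (infDist x K ^ 2 - e)) (he : 0 < e)
    (n : ℕ) :
    ∃ H : ℝ × E → E, ContinuousOn H (Set.Icc (0:ℝ) 1 ×ˢ B) ∧
      (∀ x, H (0, x) = x) ∧
      (∀ x ∈ B, ∀ t ∈ Set.Icc (0:ℝ) 1, H (t, x) ∈ B) ∧
      (∀ x ∈ B, infDist x K ≤ ρ → ∀ t, H (t, x) = x) ∧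
      (∀ x ∈ B, infDist (H (1, x)) K ^ 2 ≤ max (ρ ^ 2) (infDist x K ^ 2 - n * e)) := by
  induction n with
  | zero =>
    exact ⟨fun q => q.2, continuousOn_snd, fun _ => rfl, fun x hx _ _ => hx, fun _ _ _ _ => rfl,
      fun x _ => le_max_of_le_right (by simp)⟩
  | succ n ih =>
    obtain ⟨H, h1, h2, h3, h4, h5⟩ := ih
    refine ⟨fun q => S (q.1, H q), ?_, ?_, ?_, ?_, ?_⟩
    · exact hS.comp (continuousOn_fst.prodMk h1) fun q hq => ⟨hq.1, h3 q.2 hq.2 q.1 hq.1⟩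
    · intro x; simp [S0, h2]
    · intro x hx t ht; exact SB _ (h3 x hx t ht) t ht
    · intro x hx h t; simp only [h4 x hx h t, Sf x hx h t]
    · intro x hx
      have a := S1 _ (h3 x hx 1 ⟨zero_le_one, le_rfl⟩)
      have b := h5 x hx
      push_cast
      rcases le_max_iff.1 a with a | a
      · exact le_max_of_le_left a
      · rcases le_max_iff.1 b with b | b
        · exact le_max_of_le_left (by linarith)
        · exact le_max_of_le_right (by linarith)

/-- If an acute `r`-spanning cone field for `K_δ` exists over the annulus `K_[r−δ,r+δ]` and
`X` is a smooth unit vector field strictly subordinate to the complementary cone field, then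
there is a deformation retraction of `L_r` onto `K_{r−δ}`. -/
theorem stmt4 {E : Type*} [NormedAddCommGroup E] [InnerProductSpace ℝ E]
    [FiniteDimensional ℝ E]
    (δ r : ℝ) (hδ : 0 < δ) (hδr : δ < r / 2)
    (K L : Set E) (hKne : K.Nonempty) (hKc : IsCompact K)
    (hLne : L.Nonempty) (hLc : IsCompact L)
    (hH : hausdorffDist K L ≤ δ)
    (w : E → E) (β : E → ℝ)
    (hcone : ∀ x ∈ {x : E | r - δ ≤ infDist x K ∧ infDist x K ≤ r + δ},
      ‖w x‖ = 1 ∧ β x ∈ Set.Ico 0 (π / 2) ∧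
      ({y : E | infDist y K ≤ δ} ∩ closedBall x r).Nonempty ∧
      {y : E | infDist y K ≤ δ} ∩ closedBall x r ⊆
        {y : E | ∃ t ∈ Set.Icc (0 : ℝ) r, ∃ v : E, ‖v‖ = 1 ∧
          InnerProductGeometry.angle v (w x) ≤ β x ∧ y = x + t • v})
    (X : E → E) (hX : ContDiff ℝ (⊤ : ℕ∞) X)
    (hXsub : ∀ x ∈ {x : E | r - δ ≤ infDist x K ∧ infDist x K ≤ r + δ},
      ‖X x‖ = 1 ∧ InnerProductGeometry.angle (X x) (w x) < π / 2 - β x) :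
    ∃ H : ℝ × E → E,
      ContinuousOn H (Set.Icc (0 : ℝ) 1 ×ˢ {x : E | infDist x L ≤ r}) ∧
      (∀ x ∈ {x : E | infDist x L ≤ r}, H (0, x) = x) ∧
      (∀ x ∈ {x : E | infDist x L ≤ r}, ∀ t ∈ Set.Icc (0 : ℝ) 1,
        H (t, x) ∈ {y : E | infDist y L ≤ r}) ∧
      (∀ x ∈ {x : E | infDist x L ≤ r}, H (1, x) ∈ {y : E | infDist y K ≤ r - δ}) ∧
      (∀ y ∈ {y : E | infDist y K ≤ r - δ}, ∀ t ∈ Set.Icc (0 : ℝ) 1, H (t, y) = y) := by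
  have hrδ : 0 < r - δ := by linarith
  have hfin : Metric.hausdorffEDist K L ≠ ⊤ :=
    Metric.hausdorffEDist_ne_top_of_nonempty_of_bounded hKne hLne hKc.isBounded hLc.isBounded
  have hfin' : Metric.hausdorffEDist L K ≠ ⊤ :=
    Metric.hausdorffEDist_ne_top_of_nonempty_of_bounded hLne hKne hLc.isBounded hKc.isBounded
  have hH' : hausdorffDist L K ≤ δ := by rwa [hausdorffDist_comm]
  have hLK : ∀ x, infDist x K ≤ infDist x L + δ := fun x =>
    (infDist_le_infDist_add_hausdorffDist hfin').trans (by linarith)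
  have hKL : ∀ x, infDist x L ≤ infDist x K + δ := fun x =>
    (infDist_le_infDist_add_hausdorffDist hfin).trans (by linarith)
  -- positivity of inner products
  have pos : ∀ x : E, r - δ ≤ infDist x K → infDist x K ≤ r + δ → ∀ y : E, infDist y K ≤ δ →
      dist y x ≤ r → 0 < inner ℝ (X x) (y - x) := by
    intro x h1 h2 y h3 h4
    obtain ⟨-, -, -, hsub⟩ := hcone x ⟨h1, h2⟩
    obtain ⟨hn, hang⟩ := hXsub x ⟨h1, h2⟩
    obtain ⟨t, ht, v, hv, hva, rfl⟩ := hsub ⟨h3, h4⟩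
    have ht0 : 0 < t := by
      rcases lt_or_eq_of_le ht.1 with h | h
      · exact h
      · subst h
        simp only [zero_smul, add_zero] at h3
        linarith
    have ha : InnerProductGeometry.angle (X x) v < π / 2 := by
      have := InnerProductGeometry.angle_le_angle_add_angle (X x) (w x) v
      rw [InnerProductGeometry.angle_comm (w x) v] at this
      linarith
    have hcos : 0 < Real.cos (InnerProductGeometry.angle (X x) v) :=
      Real.cos_pos_of_mem_Ioo ⟨by linarith [InnerProductGeometry.angle_nonneg (X x) v,
        Real.pi_pos], ha⟩
    rw [add_sub_cancel_left, real_inner_smul_right]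
    have := InnerProductGeometry.cos_angle_mul_norm_mul_norm (X x) v
    rw [hn, hv] at this
    refine mul_pos ht0 ?_
    linarith
  have hcont := hX.continuous
  set B : Set E := {x : E | infDist x L ≤ r} with hBdef
  have hBc : IsClosed B := isClosed_le (continuous_infDist_pt L) continuous_const
  have hBK : ∀ x ∈ B, infDist x K ≤ r + δ := fun x hx => by
    have := hLK x
    have : infDist x L ≤ r := hx
    linarith [hLK x]
  let A : Set E := B ∩ {x | r - δ ≤ infDist x K}
  have hBcpt : IsCompact B := by
    have : B = cthickening r L := by
      ext x
      rw [hBdef, Set.mem_ofPred_eq, mem_cthickening_iff, infDist,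
        ENNReal.le_ofReal_iff_toReal_le (infEDist_ne_top hLne) (by linarith)]
    rw [this]
    exact hLc.cthickening
  have hA : IsCompact A :=
    hBcpt.inter_right (isClosed_le continuous_const (continuous_infDist_pt K))
  have hn : ∀ x ∈ A, ‖X x‖ = 1 := fun x hx => (hXsub x ⟨hx.2, hBK x hx.1⟩).1
  obtain ⟨s1, hs1, c1, hc1, D1⟩ := aux_descent X hcont A K hA hKc hKne hn (by
    intro x hx p hp hd
    have h1 : r - δ ≤ infDist x K := hx.2
    have h2 := hBK x hx.1
    have hdp : 0 < infDist x K := by linarith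
    have h01 : 0 < 1 - δ / infDist x K := by
      rw [sub_pos, div_lt_one hdp]; linarith
    have hnorm : ‖p - x‖ = infDist x K := by rw [← dist_eq_norm, dist_comm, hd]
    have := pos x h1 h2 (x + (1 - δ / infDist x K) • (p - x)) (by
      refine (infDist_le_dist_of_mem hp).trans (le_of_eq ?_)
      rw [dist_eq_norm]
      have : x + (1 - δ / infDist x K) • (p - x) - p = (-(δ / infDist x K)) • (p - x) := by
        module
      rw [this, norm_smul, hnorm, norm_neg, Real.norm_of_nonneg (by positivity)]
      field_simp) (by
      rw [dist_eq_norm, add_sub_cancel_left, norm_smul, hnorm, Real.norm_of_nonneg h01.le]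
      have : (1 - δ / infDist x K) * infDist x K = infDist x K - δ := by field_simp
      linarith)
    rw [add_sub_cancel_left, real_inner_smul_right] at this
    exact pos_of_mul_pos_right this h01.le)
  obtain ⟨s2, hs2, c2, hc2, D2⟩ := aux_descent X hcont A L hA hLc hLne hn (by
    intro x hx p hp hd
    refine pos x hx.2 (hBK x hx.1) p ?_ ?_
    · exact (infDist_le_hausdorffDist_of_mem hp hfin').trans hH'
    · rw [dist_comm, hd]; exact hx.1)
  obtain ⟨S, a1, a2, a3, a4, a5⟩ := aux_step X hcont K B (r - δ) (min s1 s2) c1 (lt_min hs1 hs2) hc1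
    hrδ (fun x hx h t t' p q u => D1 x ⟨hx, h⟩ t t' p q (u.trans (min_le_left _ _)))
    (fun x hx h t p q => by
      have := D2 x ⟨hx, h⟩ 0 t le_rfl p (q.trans (min_le_right _ _))
      rw [zero_smul, add_zero, sub_zero] at this
      have h3 : infDist (x + t • X x) L ≤ infDist x L := by
        refine le_of_sq_le_sq ?_ infDist_nonneg
        nlinarith [mul_nonneg hc2.le p]
      exact h3.trans hx)
  have he : 0 < c1 * min s1 s2 := mul_pos hc1 (lt_min hs1 hs2)
  obtain ⟨n, hnn⟩ := exists_nat_ge ((r + δ) ^ 2 / (c1 * min s1 s2))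
  rw [div_le_iff₀ he] at hnn
  obtain ⟨H, b1, b2, b3, b4, b5⟩ := aux_iter K B (r - δ) _ S a1 a2 a3 a4 a5 he n
  refine ⟨H, b1, fun x _ => b2 x, b3, fun x hx => ?_, fun y hy t _ => ?_⟩
  · refine le_of_sq_le_sq ?_ hrδ.le
    refine (b5 x hx).trans (max_le le_rfl ?_)
    have : infDist x K ^ 2 ≤ (r + δ) ^ 2 := pow_le_pow_left₀ infDist_nonneg (hBK x hx) 2
    nlinarith [sq_nonneg (r - δ)]
  · have hy' : infDist y K ≤ r - δ := hy
    refine b4 y ?_ hy' t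
    have := hKL y
    change infDist y L ≤ r
    linarith
end

section
/- Let E be a finite-dimensional real inner product space, K ⊆ E a nonempty compact set, μ ∈ [0,1], and let x ∉ K be a μ-critical point of d_K. Then for every y ∈ E, d_K(y)² ≤ d_K(x)² + dist(x,y)² + 2·μ·dist(x,y)·d_K(x). -/
open Metric

/-- Euclidean (curvature-0) case of the Toponogov comparison lemma for μ-critical points:
if `x ∉ K` is μ-critical for the distance function to `K`, then for every `y`,
`d_K(y)² ≤ d_K(x)² + dist(x,y)² + 2 μ dist(x,y) d_K(x)`. -/
theorem stmt5 {E : Type*} [NormedAddCommGroup E] [InnerProductSpace ℝ E]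
    [FiniteDimensional ℝ E]
    (K : Set E) (hKne : K.Nonempty) (hKc : IsCompact K)
    (μ : ℝ) (hμ : μ ∈ Set.Icc (0 : ℝ) 1) (x : E) (hx : x ∉ K)
    (hcrit : infDist x (convexHull ℝ {q ∈ K | dist x q = infDist x K}) ≤ μ * infDist x K) :
    ∀ y : E, (infDist y K) ^ 2 ≤
      (infDist x K) ^ 2 + (dist x y) ^ 2 + 2 * μ * dist x y * infDist x K := by
  intro y
  set Γ : Set E := {q ∈ K | dist x q = infDist x K} with hΓ
  set r := infDist x K with hr
  have hne : (convexHull ℝ Γ).Nonempty := by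
    obtain ⟨q, hq, hqd⟩ := hKc.exists_infDist_eq_dist hKne x
    exact ⟨q, subset_convexHull ℝ Γ ⟨hq, hqd.symm⟩⟩
  have hsub : convexHull ℝ Γ ⊆ {z : E | inner ℝ (y - x) z ≤
      inner ℝ (y - x) x + ((dist x y) ^ 2 + r ^ 2 - (infDist y K) ^ 2) / 2} := by
    apply convexHull_min
    · rintro q ⟨hq, hqd⟩
      have h1 : infDist y K ≤ dist y q := infDist_le_dist_of_mem hq
      have h2 : (infDist y K) ^ 2 ≤ (dist y q) ^ 2 := by
        gcongr
        exact infDist_nonneg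
      have h3 : dist y q ^ 2 = dist x y ^ 2 - 2 * inner ℝ (y - x) (q - x) + dist x q ^ 2 := by
        rw [dist_eq_norm y q, dist_comm x y, dist_eq_norm y x, dist_comm x q, dist_eq_norm q x,
          ← norm_sub_sq_real]
        congr 2
        abel
      rw [hqd, inner_sub_right] at h3
      simp only [Set.mem_setOf_eq]
      linarith
    · exact convex_halfSpace_le (innerₛₗ ℝ (y - x)).isLinear _
  have key : ∀ ε > 0, (infDist y K) ^ 2 ≤
      r ^ 2 + (dist x y) ^ 2 + 2 * (μ * r + ε) * dist x y := by
    intro ε hε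
    obtain ⟨z, hz, hzd⟩ := (infDist_lt_iff hne).1 (lt_of_le_of_lt hcrit (lt_add_of_pos_right _ hε))
    have h1 := hsub hz
    simp only [Set.mem_setOf_eq] at h1
    have h2 : -(dist x y * dist x z) ≤ inner ℝ (y - x) (z - x) := by
      have := abs_real_inner_le_norm (y - x) (z - x)
      rw [← dist_eq_norm, ← dist_eq_norm, dist_comm y x, dist_comm z x] at this
      exact (abs_le.1 this).1
    rw [inner_sub_right] at h2
    have h3 : dist x y * dist x z ≤ dist x y * (μ * r + ε) := by gcongr
    linarith
  have hlim : Filter.Tendsto (fun ε : ℝ => r ^ 2 + (dist x y) ^ 2 + 2 * (μ * r + ε) * dist x y)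
      (nhdsWithin 0 (Set.Ioi 0)) (nhds (r ^ 2 + (dist x y) ^ 2 + 2 * (μ * r + 0) * dist x y)) := by
    apply Filter.Tendsto.mono_left _ nhdsWithin_le_nhds
    apply Continuous.tendsto (f := fun ε : ℝ => r ^ 2 + (dist x y) ^ 2 + 2 * (μ * r + ε) * dist x y)
    fun_prop
  have := ge_of_tendsto hlim (Filter.eventually_of_mem self_mem_nhdsWithin key)
  linarith
end

section
/- Let X be a metric space, f : X → ℝ locally Lipschitz, x ∈ X with f(x) = 0, and μ, r > 0. Assume Metric.closedBall x r is a complete set (IsComplete), and that for every z ∈ X with dist(z,x) < r and f(z) ≥ 0 one has |∇_z f| ≥ μ, where |∇_z f| := max(0, limsup_{y → z, y ≠ z} (f(y) − f(z))/dist(y,z)). Then for every C with 0 < C < μ there exists a point z ∈ X with dist(z,x) ≤ r and f(z) = C·r. -/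
open Metric Filter

theorem stmt6_aux {X : Type*} [MetricSpace X] (f : X → ℝ) (hf : LocallyLipschitz f)
    (z : X) (μ C : ℝ) (hC0 : 0 < C) (hCμ : C < μ)
    (h : μ ≤ max 0 (limsup (fun y => (f y - f z) / dist y z) (nhdsWithin z {z}ᶜ))) :
    ∃ᶠ y in nhdsWithin z {z}ᶜ, C < (f y - f z) / dist y z := by
  intro hn
  simp only [not_lt] at hn
  rcases le_max_iff.1 h with h | h
  · linarith
  rcases eq_or_neBot (nhdsWithin z {z}ᶜ) with hb | hb
  · rw [hb] at h
    simp [limsup, limsSup] at h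
    linarith
  · obtain ⟨K, t, ht, hK⟩ := hf z
    have h1 : ∀ᶠ y in nhdsWithin z {z}ᶜ, -(K:ℝ) ≤ (f y - f z) / dist y z := by
      filter_upwards [nhdsWithin_le_nhds ht, self_mem_nhdsWithin] with y hy hyz
      have hd : 0 < dist y z := dist_pos.2 hyz
      rw [le_div_iff₀ hd]
      have := hK.dist_le_mul y hy z (mem_of_mem_nhds ht)
      rw [Real.dist_eq] at this
      have := neg_abs_le (f y - f z)
      linarith
    have h2 : limsup (fun y => (f y - f z) / dist y z) (nhdsWithin z {z}ᶜ) ≤ C := by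
      refine limsup_le_of_le ?_ hn
      exact IsBoundedUnder.isCoboundedUnder_le ⟨-(K:ℝ), h1⟩
    linarith

/-- Lytchak's Lemma 4.1: if a locally Lipschitz function vanishes at `x` and has descending
gradient norm at least `μ` at every nonnegative point of the open ball of radius `r`, then
for every `0 < C < μ` there is a point `z` with `dist z x ≤ r` and `f z = C * r`. -/
theorem stmt6 {X : Type*} [MetricSpace X] (f : X → ℝ) (hf : LocallyLipschitz f)
    (x : X) (hfx : f x = 0) (μ r : ℝ) (hμ : 0 < μ) (hr : 0 < r)
    (hcomp : IsComplete (closedBall x r))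
    (hgrad : ∀ z : X, dist z x < r → 0 ≤ f z →
      μ ≤ max 0 (limsup (fun y => (f y - f z) / dist y z) (nhdsWithin z {z}ᶜ)))
    (C : ℝ) (hC0 : 0 < C) (hCμ : C < μ) :
    ∃ z : X, dist z x ≤ r ∧ f z = C * r := by
  have hcont : Continuous f := hf.continuous
  let A := {z : X // C * dist z x ≤ f z ∧ f z ≤ C * r}
  have hball : ∀ a : A, dist a.1 x ≤ r := fun a =>
    le_of_mul_le_mul_left (a.2.1.trans a.2.2) hC0
  have : Nonempty A := ⟨⟨x, by simp [hfx], by rw [hfx]; positivity⟩⟩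
  obtain ⟨m, hm⟩ : ∃ m : A, ∀ a : A, C * dist m.1 a.1 ≤ f a.1 - f m.1 →
      C * dist a.1 m.1 ≤ f m.1 - f a.1 := by
    refine exists_maximal_of_nonempty_chains_bounded
      (r := fun a b : A => C * dist a.1 b.1 ≤ f b.1 - f a.1) ?_ ?_
    · intro c hc hne
      have hcd : ∀ a ∈ c, ∀ b ∈ c, C * dist a.1 b.1 ≤ |f b.1 - f a.1| := by
        intro a ha b hb
        rcases eq_or_ne a b with rfl | hab
        · simp
        · rcases hc ha hb hab with h | h
          · exact h.trans (le_abs_self _)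
          · rw [dist_comm, abs_sub_comm]; exact h.trans (le_abs_self _)
      let S := (fun a : A => f a.1) '' c
      have hSne : S.Nonempty := hne.image _
      have hSb : BddAbove S := ⟨C * r, by rintro _ ⟨a, -, rfl⟩; exact a.2.2⟩
      obtain ⟨u, -, hu, huS⟩ := exists_seq_tendsto_sSup hSne hSb
      choose y hyc hyu using huS
      have hfy : Tendsto (fun n => f (y n).1) atTop (nhds (sSup S)) := by
        simpa only [hyu] using hu
      have hcau : CauchySeq (fun n => (y n).1) := by
        rw [Metric.cauchySeq_iff]
        intro ε hε
        obtain ⟨N, hN⟩ := Metric.cauchySeq_iff.1 hfy.cauchySeq (C * ε) (by positivity)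
        refine ⟨N, fun p hp q hq => ?_⟩
        have h1 := hN q hq p hp
        rw [Real.dist_eq] at h1
        exact lt_of_mul_lt_mul_left ((hcd _ (hyc p) _ (hyc q)).trans_lt h1) hC0.le
      obtain ⟨w, -, hw⟩ := cauchySeq_tendsto_of_isComplete hcomp
        (fun n => mem_closedBall.2 (hball (y n))) hcau
      have hfw : f w = sSup S :=
        tendsto_nhds_unique ((hcont.tendsto w).comp hw) hfy
      have hwA : C * dist w x ≤ f w ∧ f w ≤ C * r := by
        have hcl : IsClosed {z : X | C * dist z x ≤ f z ∧ f z ≤ C * r} :=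
          (isClosed_le (by fun_prop) hcont).inter (isClosed_le hcont continuous_const)
        exact hcl.mem_of_tendsto hw (Eventually.of_forall fun n => (y n).2)
      refine ⟨⟨w, hwA⟩, fun a ha => ?_⟩
      have h1 : C * dist a.1 w ≤ |f w - f a.1| := by
        have hcl : IsClosed {z : X | C * dist a.1 z ≤ |f z - f a.1|} :=
          isClosed_le (continuous_const.mul (continuous_const.dist continuous_id))
            (hcont.sub continuous_const).abs
        exact hcl.mem_of_tendsto hw (Eventually.of_forall fun n => hcd a ha _ (hyc n))
      have h2 : f a.1 ≤ f w := by
        rw [hfw]; exact le_csSup hSb ⟨a, ha, rfl⟩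
      rwa [abs_of_nonneg (sub_nonneg.2 h2)] at h1
    · intro a b c hab hbc
      have := mul_le_mul_of_nonneg_left (dist_triangle a.1 b.1 c.1) hC0.le
      linarith
  refine ⟨m.1, hball m, ?_⟩
  by_contra hne
  have hlt : f m.1 < C * r := lt_of_le_of_ne m.2.2 hne
  have hd : dist m.1 x < r := lt_of_mul_lt_mul_left (m.2.1.trans_lt hlt) hC0.le
  have h0 : 0 ≤ f m.1 := le_trans (by positivity) m.2.1
  have hfr := stmt6_aux f hf m.1 μ C hC0 hCμ (hgrad m.1 hd h0)
  have hev : ∀ᶠ y in nhdsWithin m.1 {m.1}ᶜ, f y < C * r ∧ y ≠ m.1 :=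
    (((hcont.tendsto m.1).eventually_lt_const hlt).filter_mono nhdsWithin_le_nhds).and
      self_mem_nhdsWithin
  obtain ⟨y, hy1, hy2, hy3⟩ := (hfr.and_eventually hev).exists
  have hyd : 0 < dist y m.1 := dist_pos.2 hy3
  rw [lt_div_iff₀ hyd] at hy1
  have htri := mul_le_mul_of_nonneg_left (dist_triangle y m.1 x) hC0.le
  have hmA := m.2.1
  have := hm ⟨y, by linarith, hy2.le⟩ (by rw [dist_comm]; exact hy1.le)
  have h5 : 0 < C * dist y m.1 := by positivity
  simp only at this
  linarith
end

section
/- Let E be a finite-dimensional real inner product space, let K, L ⊆ E be nonempty compact sets, δ > 0 with hausdorffDist K L ≤ δ, μ ∈ [0,1), and let x ∉ K be a μ-critical point of d_K. Let C satisfy μ < C ≤ 1 and C ≥ μ + 2·√(δ/d_K(x)). Then there exists y ∉ L which is a C-critical point of d_L, with d_L(y) ≥ d_L(x) and dist(x,y) ≤ 4δ/(C−μ). -/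
open Metric

lemma aux_growth {E : Type*} [NormedAddCommGroup E] [InnerProductSpace ℝ E]
    [FiniteDimensional ℝ E]
    (K : Set E) (hKne : K.Nonempty) (hKc : IsCompact K) (μ : ℝ) (x y : E)
    (hcrit : infDist x (convexHull ℝ {q ∈ K | dist x q = infDist x K}) ≤ μ * infDist x K) :
    infDist y K ^ 2 ≤ infDist x K ^ 2 + 2 * μ * infDist x K * dist x y + dist x y ^ 2 := by
  have hGc : IsCompact {q ∈ K | dist x q = infDist x K} :=
    hKc.inter_right (isClosed_eq (by fun_prop) continuous_const)
  have hGne : {q ∈ K | dist x q = infDist x K}.Nonempty := by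
    obtain ⟨q, hq, h⟩ := hKc.exists_infDist_eq_dist hKne x
    exact ⟨q, hq, h.symm⟩
  have hHc : IsCompact (closure (convexHull ℝ {q ∈ K | dist x q = infDist x K})) :=
    (isBounded_convexHull.2 hGc.isBounded).isCompact_closure
  obtain ⟨p, hp, hpd⟩ := hHc.exists_infDist_eq_dist hGne.convexHull.closure x
  rw [infDist_closure] at hpd
  obtain ⟨q, ⟨hqK, hqd⟩, hq⟩ : ∃ q ∈ {q ∈ K | dist x q = infDist x K},
      inner ℝ (y - x) p ≤ inner ℝ (y - x) q := by
    obtain ⟨q, hq, hqm⟩ := hGc.exists_isMaxOn hGne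
      (f := fun w => (inner ℝ (y - x) w : ℝ)) (by fun_prop)
    refine ⟨q, hq, ?_⟩
    have hsub : closure (convexHull ℝ {q ∈ K | dist x q = infDist x K}) ⊆
        {w | inner ℝ (y - x) w ≤ inner ℝ (y - x) q} :=
      closure_minimal (convexHull_min (fun w hw => hqm hw)
        (convex_halfSpace_le (innerₛₗ ℝ (y - x)).isLinear _))
        (isClosed_le (by fun_prop) continuous_const)
    exact hsub hp
  have h1 : infDist y K ≤ dist y q := infDist_le_dist_of_mem hqK
  have h2 : dist y q ^ 2 = dist x q ^ 2 + 2 * inner ℝ (y - x) (x - q) + dist x y ^ 2 := by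
    rw [dist_comm x y, dist_eq_norm, dist_eq_norm, dist_eq_norm,
      show y - q = (y - x) + (x - q) by abel, norm_add_sq_real]
    ring
  have h3 : inner ℝ (y - x) (x - q) ≤ inner ℝ (y - x) (x - p) := by
    rw [inner_sub_right, inner_sub_right]; linarith
  have h4 : inner ℝ (y - x) (x - p) ≤ dist x y * (μ * infDist x K) := by
    refine (real_inner_le_norm _ _).trans ?_
    rw [← dist_eq_norm, ← dist_eq_norm, dist_comm y x]
    exact mul_le_mul_of_nonneg_left (hpd ▸ hcrit) dist_nonneg
  have h5 : infDist y K ^ 2 ≤ dist y q ^ 2 := pow_le_pow_left₀ infDist_nonneg h1 2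
  rw [h2, hqd] at h5
  linarith

lemma aux_ascent {E : Type*} [NormedAddCommGroup E] [InnerProductSpace ℝ E]
    [FiniteDimensional ℝ E]
    (L : Set E) (hLne : L.Nonempty) (hLc : IsCompact L) (C : ℝ) (hC0 : 0 < C) (hC : C ≤ 1) (y : E)
    (hcrit : C * infDist y L < infDist y (convexHull ℝ {q ∈ L | dist y q = infDist y L}))
    (η : ℝ) (hη : 0 < η) :
    ∃ z, dist y z < η ∧ infDist y L + C * dist y z < infDist z L := by
  have hGc : IsCompact {q ∈ L | dist y q = infDist y L} :=
    hLc.inter_right (isClosed_eq (by fun_prop) continuous_const)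
  have hGne : {q ∈ L | dist y q = infDist y L}.Nonempty := by
    obtain ⟨q, hq, h⟩ := hLc.exists_infDist_eq_dist hLne y
    exact ⟨q, hq, h.symm⟩
  have hHc : IsCompact (closure (convexHull ℝ {q ∈ L | dist y q = infDist y L})) :=
    (isBounded_convexHull.2 hGc.isBounded).isCompact_closure
  obtain ⟨p, hp, hpd⟩ := hHc.exists_infDist_eq_dist hGne.convexHull.closure y
  rw [infDist_closure] at hpd
  have hmin : ∀ w ∈ closure (convexHull ℝ {q ∈ L | dist y q = infDist y L}),
      inner ℝ (y - p) (w - p) ≤ 0 := by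
    refine (norm_eq_iInf_iff_real_inner_le_zero (convex_convexHull ℝ _).closure hp).1 ?_
    rw [← dist_eq_norm, ← hpd, ← infDist_closure, infDist_eq_iInf]
    simp only [dist_eq_norm]
  set d := infDist y L with hd
  have hd0 : 0 ≤ d := infDist_nonneg
  obtain ⟨v, hv⟩ : ∃ v, v = y - p := ⟨_, rfl⟩
  have hvn : C * d < ‖v‖ := by rw [hv, ← dist_eq_norm, ← hpd]; exact hcrit
  have hv0 : 0 < ‖v‖ := lt_of_le_of_lt (by positivity) hvn
  have hG : ∀ q ∈ L, dist y q = d → C * d * ‖v‖ < inner ℝ v (y - q) := by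
    intro q hq hqd
    have h := hmin q (subset_closure (subset_convexHull ℝ _ ⟨hq, hqd⟩))
    rw [← hv] at h
    have h2 : inner ℝ v (y - q) = ‖v‖ ^ 2 - inner ℝ v (q - p) := by
      rw [show y - q = v - (q - p) by rw [hv]; abel, inner_sub_right,
        real_inner_self_eq_norm_sq]
    nlinarith
  obtain ⟨e, he, hfar⟩ : ∃ e > 0, ∀ q ∈ L, inner ℝ v (y - q) ≤ C * d * ‖v‖ →
      d + e ≤ dist y q := by
    have hc : IsCompact (L ∩ {q | inner ℝ v (y - q) ≤ C * d * ‖v‖}) :=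
      hLc.inter_right (isClosed_le (by fun_prop) continuous_const)
    rcases (L ∩ {q | inner ℝ v (y - q) ≤ C * d * ‖v‖}).eq_empty_or_nonempty with h0 | h0
    · refine ⟨1, one_pos, fun q hq hq2 => ?_⟩
      have : q ∈ L ∩ {q | inner ℝ v (y - q) ≤ C * d * ‖v‖} := ⟨hq, hq2⟩
      rw [h0] at this
      exact this.elim
    · obtain ⟨q0, ⟨hq0, hq0'⟩, hq0d⟩ := hc.exists_infDist_eq_dist h0 y
      have hlt : d < dist y q0 := by
        refine lt_of_le_of_ne (infDist_le_dist_of_mem hq0) fun h => ?_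
        exact absurd (hG q0 hq0 h.symm) (not_lt.2 hq0')
      refine ⟨dist y q0 - d, by linarith, fun q hq hq2 => ?_⟩
      have := infDist_le_dist_of_mem (x := y)
        (show q ∈ L ∩ {q | inner ℝ v (y - q) ≤ C * d * ‖v‖} from ⟨hq, hq2⟩)
      linarith
  obtain ⟨s, hs0, hs⟩ : ∃ s > 0, s < min η (e / 2) :=
    exists_between (lt_min hη (by positivity))
  obtain ⟨t, ht⟩ : ∃ t, t = s / ‖v‖ := ⟨_, rfl⟩
  have ht0 : 0 < t := by rw [ht]; positivity
  have hts : t * ‖v‖ = s := by rw [ht]; field_simp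
  have hdist : dist y (y + t • v) = s := by
    rw [dist_self_add_right, norm_smul, Real.norm_of_nonneg ht0.le, hts]
  refine ⟨y + t • v, by rw [hdist]; exact hs.trans_le (min_le_left _ _), ?_⟩
  have hse : s < e / 2 := hs.trans_le (min_le_right _ _)
  obtain ⟨q, hq, hqd⟩ := hLc.exists_infDist_eq_dist hLne (y + t • v)
  rw [hdist, hqd]
  have hin : C * d * ‖v‖ < inner ℝ v (y - q) := by
    by_contra! hcon
    have h1 := hfar q hq hcon
    have h2 : infDist (y + t • v) L ≤ infDist y L + dist (y + t • v) y :=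
      infDist_le_infDist_add_dist
    have h3 := dist_triangle y (y + t • v) q
    rw [dist_comm _ y] at h2
    linarith
  have hdq : d ≤ dist y q := infDist_le_dist_of_mem hq
  have hsq : dist (y + t • v) q ^ 2 = dist y q ^ 2 + 2 * t * inner ℝ v (y - q) + s ^ 2 := by
    rw [dist_eq_norm, dist_eq_norm, show y + t • v - q = t • v + (y - q) by abel,
      norm_add_sq_real, norm_smul, Real.norm_of_nonneg ht0.le, hts, real_inner_smul_left]
    ring
  refine lt_of_pow_lt_pow_left₀ 2 dist_nonneg ?_
  rw [hsq]
  have h1 : d ^ 2 ≤ dist y q ^ 2 := pow_le_pow_left₀ hd0 hdq 2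
  have h2 : t * (C * d * ‖v‖) < t * inner ℝ v (y - q) := mul_lt_mul_of_pos_left hin ht0
  have h3 : t * (C * d * ‖v‖) = C * d * s := by rw [← hts]; ring
  have h4 : C ^ 2 * s ^ 2 ≤ s ^ 2 := by
    have : C ^ 2 ≤ 1 := by nlinarith
    nlinarith [sq_nonneg s]
  nlinarith


/-- Stability of μ-critical points (Euclidean case): if `d_H(K,L) ≤ δ` and `x ∉ K` is a
μ-critical point of `d_K`, then for suitable `C` there is a `C`-critical point `y` of `d_L`
with `d_L(y) ≥ d_L(x)` and `dist(x,y) ≤ 4δ/(C−μ)`. -/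
theorem stmt7 {E : Type*} [NormedAddCommGroup E] [InnerProductSpace ℝ E]
    [FiniteDimensional ℝ E]
    (K L : Set E) (hKne : K.Nonempty) (hKc : IsCompact K)
    (hLne : L.Nonempty) (hLc : IsCompact L)
    (δ : ℝ) (hδ : 0 < δ) (hH : hausdorffDist K L ≤ δ)
    (μ : ℝ) (hμ : μ ∈ Set.Ico (0 : ℝ) 1) (x : E) (hx : x ∉ K)
    (hcrit : infDist x (convexHull ℝ {q ∈ K | dist x q = infDist x K}) ≤ μ * infDist x K)
    (C : ℝ) (hC1 : μ < C) (hC2 : C ≤ 1)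
    (hC3 : μ + 2 * Real.sqrt (δ / infDist x K) ≤ C) :
    ∃ y : E, y ∉ L ∧
      infDist y (convexHull ℝ {q ∈ L | dist y q = infDist y L}) ≤ C * infDist y L ∧
      infDist x L ≤ infDist y L ∧ dist x y ≤ 4 * δ / (C - μ) := by
  obtain ⟨hμ0, hμ1⟩ := hμ
  have hr : 0 < infDist x K := (hKc.isClosed.notMem_iff_infDist_pos hKne).1 hx
  have hfin : hausdorffEDist K L ≠ ⊤ :=
    hausdorffEDist_ne_top_of_nonempty_of_bounded hKne hLne hKc.isBounded hLc.isBounded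
  have hfin' : hausdorffEDist L K ≠ ⊤ := by rwa [hausdorffEDist_comm]
  have hKL : ∀ z, infDist z L ≤ infDist z K + δ := fun z =>
    (infDist_le_infDist_add_hausdorffDist hfin).trans (by linarith)
  have hLK : ∀ z, infDist z K ≤ infDist z L + δ := fun z =>
    (infDist_le_infDist_add_hausdorffDist hfin').trans (by rw [hausdorffDist_comm]; linarith)
  have hgrow := fun y => aux_growth K hKne hKc μ x y hcrit
  obtain ⟨r, hrr⟩ : ∃ r, r = infDist x K := ⟨_, rfl⟩
  rw [← hrr] at hr hC3
  obtain ⟨ε, hε⟩ : ∃ ε, ε = C - μ := ⟨_, rfl⟩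
  have hε0 : 0 < ε := by linarith
  have hδr : 4 * δ ≤ ε ^ 2 * r := by
    have h1 : 2 * Real.sqrt (δ / r) ≤ ε := by linarith
    have h2 := Real.sq_sqrt (show 0 ≤ δ / r by positivity)
    have h3 : (2 * Real.sqrt (δ / r)) ^ 2 ≤ ε ^ 2 := pow_le_pow_left₀ (by positivity) h1 2
    rw [mul_pow, h2] at h3
    have h4 : δ / r * r = δ := by field_simp
    nlinarith
  have hε1 : ε ≤ 1 := by linarith
  have hδr' : 4 * δ ≤ r := by nlinarith [mul_nonneg hε0.le hr.le]
  rw [← hε]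
  obtain ⟨R, hR⟩ : ∃ R, R = 4 * δ / ε := ⟨_, rfl⟩
  have hR0 : 0 < R := by rw [hR]; positivity
  have hRε : R * ε = 4 * δ := by rw [hR]; field_simp
  have hRr : R ≤ ε * r := by
    by_contra! h
    nlinarith
  rw [← hR]
  obtain ⟨y, hy, hmax⟩ := (isCompact_closedBall x R).exists_isMaxOn
    (f := fun z => infDist z L - C * dist x z) ⟨x, mem_closedBall_self hR0.le⟩
    ((continuous_infDist_pt L).sub (continuous_const.mul (by fun_prop))).continuousOn
  have hxy : dist x y ≤ R := by rw [dist_comm]; exact hy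
  have h0 : infDist x L + C * dist x y ≤ infDist y L := by
    have := hmax (mem_closedBall_self hR0.le)
    simp only [Set.mem_ofPred_eq, dist_self] at this
    linarith
  have hC0 : 0 < C := by linarith
  have hxL := hLK x
  rw [← hrr] at hxL
  have hCd : 0 ≤ C * dist x y := by positivity
  refine ⟨y, ?_, ?_, by linarith, hxy⟩
  · intro hyL
    rw [infDist_zero_of_mem hyL] at h0
    linarith
  by_contra! hcon
  have hlt : dist x y < R := by
    refine lt_of_le_of_ne hxy fun h => ?_
    have h1 := hgrow y
    rw [← hrr, h] at h1
    rw [h] at h0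
    have h2 : r + (μ + ε / 2) * R ≤ infDist y K := by
      have := hKL y
      have : C = μ + ε := by linarith
      subst this
      linarith
    have h3 : (r + (μ + ε / 2) * R) ^ 2 ≤ infDist y K ^ 2 :=
      pow_le_pow_left₀ (by positivity) h2 2
    have h4 : R * R ≤ R * (ε * r) := mul_le_mul_of_nonneg_left hRr hR0.le
    have h5 : 0 < ((μ + ε / 2) * R) ^ 2 := by positivity
    nlinarith
  obtain ⟨z, hz1, hz2⟩ := aux_ascent L hLne hLc C hC0 hC2 y hcon (R - dist x y) (by linarith)
  have htri := dist_triangle x y z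
  have hzm : z ∈ closedBall x R := by rw [mem_closedBall, dist_comm]; linarith
  have := hmax hzm
  simp only [Set.mem_ofPred_eq] at this
  nlinarith [mul_le_mul_of_nonneg_left htri hC0.le]
end

section
/- For all real numbers a > 0, C ∈ (0,1), and δ > 0 satisfying 9·δ ≤ 2·tanh(a)·C², one has cosh(a + 2δ) > cosh(4δ/C)·cosh(a). -/
theorem cosh_aux (t : ℝ) (h0 : 0 ≤ t) (h1 : t ≤ 1) : Real.cosh t ≤ 1 + 9 / 16 * t ^ 2 := by
  have ha : |t| ≤ 1 := by rw [abs_of_nonneg h0]; exact h1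
  have e1 := Real.exp_bound ha (n := 4) (by norm_num)
  have e2 := Real.exp_bound (x := -t) (by rwa [abs_neg]) (n := 4) (by norm_num)
  rw [abs_neg] at e2
  rw [abs_of_nonneg h0] at e1 e2
  have f1 := (abs_le.mp e1).2
  have f2 := (abs_le.mp e2).2
  simp [Finset.sum_range_succ, Nat.factorial] at f1 f2
  rw [Real.cosh_eq]
  have : t ^ 4 ≤ t ^ 2 := pow_le_pow_of_le_one h0 h1 (by norm_num)
  have := sq_nonneg t
  ring_nf at f1 f2 ⊢
  linarith

/-- The analytic core of the stability proposition in curvature ≥ −1: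
if `9δ ≤ 2 tanh(a) C²` then `cosh(a + 2δ) > cosh(4δ/C) cosh(a)`. -/
theorem stmt9 (a C δ : ℝ) (ha : 0 < a) (hC : C ∈ Set.Ioo (0 : ℝ) 1) (hδ : 0 < δ)
    (h : 9 * δ ≤ 2 * Real.tanh a * C ^ 2) :
    Real.cosh (4 * δ / C) * Real.cosh a < Real.cosh (a + 2 * δ) := by
  obtain ⟨hC0, hC1⟩ := hC
  have hT := Real.tanh_lt_one a
  have hc := Real.cosh_pos a
  have hs : 0 < Real.sinh a := Real.sinh_pos_iff.mpr ha
  have hsT : Real.tanh a * Real.cosh a = Real.sinh a := by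
    rw [Real.tanh_eq_sinh_div_cosh]; field_simp
  have ht : 4 * δ / C ≤ 1 := by
    rw [div_le_one hC0]
    nlinarith [mul_pos hC0 hC0]
  have h1 := cosh_aux (4 * δ / C) (by positivity) ht
  have h2 : 9 / 16 * (4 * δ / C) ^ 2 ≤ 2 * Real.tanh a * δ := by
    have : 9 / 16 * (4 * δ / C) ^ 2 = 9 * δ * δ / C ^ 2 := by field_simp; norm_num
    rw [this, div_le_iff₀ (by positivity)]
    nlinarith
  have h3 : 2 * δ < Real.sinh (2 * δ) := Real.self_lt_sinh_iff.mpr (by positivity)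
  have h4 := Real.one_le_cosh (2 * δ)
  rw [Real.cosh_add]
  calc _ ≤ (1 + 2 * Real.tanh a * δ) * Real.cosh a := by gcongr; linarith
    _ = Real.cosh a + Real.sinh a * (2 * δ) := by rw [← hsT]; ring
    _ < _ := by nlinarith [mul_lt_mul_of_pos_left h3 hs]
end

section
/- Let E be a finite-dimensional real inner product space, μ ∈ (0,1), 0 < δ < r, K ⊆ E a nonempty compact set, and x ∈ E with d_K(x) ≤ r + δ and δ ≤ d_K(x) − r·(4−μ²)/(4+μ²). If no point z ∉ K with d_K(z) ∈ [d_K(x), d_K(x) + 2(r − d_K(x) + δ)/μ] is a μ-critical point of d_K, then there exists an acute r-spanning cone for K_δ from x: there are a unit vector w ∈ E and β ∈ [0, π/2) such that K_δ ∩ Metric.closedBall x r is nonempty and contained in {x + t • v : t ∈ [0,r], ‖v‖ = 1, angle(v,w) ≤ β}. -/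
open Real Metric InnerProductGeometry

lemma aux_sep {E : Type*} [NormedAddCommGroup E] [InnerProductSpace ℝ E]
    [FiniteDimensional ℝ E] (G : Set E) (hG : G.Nonempty) (z : E) (c : ℝ) (hc : 0 ≤ c)
    (h : c < infDist z (convexHull ℝ G)) :
    ∃ u : E, ‖u‖ = 1 ∧ ∀ q ∈ G, c < inner ℝ (z - q) u := by
  set C := closure (convexHull ℝ G) with hC
  have hCne : C.Nonempty := (hG.convexHull (𝕜 := ℝ)).closure
  have hCconv : Convex ℝ C := (convex_convexHull ℝ G).closure
  obtain ⟨p, hpC, hp⟩ := (isClosed_closure : IsClosed C).exists_infDist_eq_dist hCne z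
  have hd : c < ‖z - p‖ := by
    rw [← dist_eq_norm, ← hp, infDist_closure]; exact h
  have hinf : ‖z - p‖ = ⨅ w : C, ‖z - w‖ := by
    rw [← dist_eq_norm, ← hp, infDist_eq_iInf]
    simp only [dist_eq_norm]
    rfl
  have hin := (norm_eq_iInf_iff_real_inner_le_zero hCconv hpC).1 hinf
  have hpos : 0 < ‖z - p‖ := lt_of_le_of_lt hc hd
  refine ⟨(‖z - p‖)⁻¹ • (z - p), ?_, ?_⟩
  · rw [norm_smul, norm_inv, norm_norm, inv_mul_cancel₀ hpos.ne']
  · intro q hq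
    have h1 := hin q (subset_closure (subset_convexHull ℝ G hq))
    refine lt_of_lt_of_le hd ?_
    rw [inner_smul_right, ← div_eq_inv_mul, le_div_iff₀ hpos]
    have h2 : z - q = (z - p) - (q - p) := by abel
    rw [h2, inner_sub_left, real_inner_self_eq_norm_mul_norm, real_inner_comm]
    linarith

lemma aux_incr {E : Type*} [NormedAddCommGroup E] [InnerProductSpace ℝ E]
    [FiniteDimensional ℝ E] (μ : ℝ) (hμ0 : 0 < μ) (hμ1 : μ < 1)
    (K : Set E) (hKne : K.Nonempty) (hKc : IsCompact K) (z : E)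
    (u : E) (hu : ‖u‖ = 1)
    (h : ∀ q ∈ {q ∈ K | dist z q = infDist z K}, μ * infDist z K < inner ℝ (z - q) u)
    (η : ℝ) (hη : 0 < η) :
    ∃ t, 0 < t ∧ t ≤ η ∧ infDist z K + μ * t < infDist (z + t • u) K := by
  set d := infDist z K with hd
  have hd0 : 0 ≤ d := infDist_nonneg
  set K' := {q ∈ K | inner ℝ (z - q) u ≤ μ * d} with hK'
  have hK'c : IsCompact K' := by
    have : K' = K ∩ {q | inner ℝ (z - q) u ≤ μ * d} := rfl
    rw [this]
    apply hKc.inter_right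
    exact isClosed_le (by fun_prop) (by fun_prop)
  have hm : ∃ m, d < m ∧ ∀ q ∈ K', m ≤ dist z q := by
    rcases K'.eq_empty_or_nonempty with he | hne
    · exact ⟨d + 1, by linarith, by simp [he]⟩
    · obtain ⟨p, hp, hpd⟩ := hK'c.exists_infDist_eq_dist hne z
      refine ⟨dist z p, ?_, fun q hq => hpd ▸ infDist_le_dist_of_mem hq⟩
      refine lt_of_le_of_ne (infDist_le_dist_of_mem hp.1) fun hh => ?_
      exact absurd (h p ⟨hp.1, hh.symm⟩) (not_lt.2 hp.2)
  obtain ⟨m, hdm, hm⟩ := hm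
  refine ⟨min η ((m - d) / 4), lt_min hη (by linarith), min_le_left _ _, ?_⟩
  have ht1 : min η ((m - d) / 4) ≤ (m - d) / 4 := min_le_right _ _
  have ht0 : 0 < min η ((m - d) / 4) := lt_min hη (by linarith)
  generalize min η ((m - d) / 4) = t at *
  obtain ⟨q, hq, hqd⟩ := hKc.exists_infDist_eq_dist hKne (z + t • u)
  rw [hqd]
  have htu : ‖t • u‖ = t := by rw [norm_smul, hu, Real.norm_of_nonneg ht0.le, mul_one]
  by_cases hqK : inner ℝ (z - q) u ≤ μ * d
  · have h1 := hm q ⟨hq, hqK⟩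
    have h2 : dist z q ≤ dist (z + t • u) q + t := by
      have := dist_triangle z (z + t • u) q
      have h3 : dist z (z + t • u) = t := by simp [htu]
      linarith
    nlinarith
  · push Not at hqK
    rw [dist_eq_norm]
    have h1 : z + t • u - q = (z - q) + t • u := by abel
    have h2 : d ≤ ‖z - q‖ := by rw [← dist_eq_norm]; exact infDist_le_dist_of_mem hq
    have h3 := norm_add_sq_real (z - q) (t • u)
    rw [inner_smul_right, htu] at h3
    rw [h1]
    apply lt_of_pow_lt_pow_left₀ 2 (norm_nonneg _)
    rw [h3]
    nlinarith [mul_lt_mul_of_pos_left hqK ht0, mul_self_le_mul_self hd0 h2,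
      mul_pos (mul_pos ht0 ht0) (show 0 < 1 - μ ^ 2 by nlinarith)]

lemma aux_far {E : Type*} [NormedAddCommGroup E] [InnerProductSpace ℝ E]
    [FiniteDimensional ℝ E] (μ : ℝ) (hμ0 : 0 < μ) (hμ1 : μ < 1)
    (K : Set E) (hKne : K.Nonempty) (hKc : IsCompact K) (x : E) (hx : 0 < infDist x K)
    (l : ℝ) (hl : 0 ≤ l)
    (hcrit : ∀ z : E, z ∉ K →
      infDist z K ∈ Set.Icc (infDist x K) (infDist x K + l) →
      ¬ (infDist z (convexHull ℝ {q ∈ K | dist z q = infDist z K}) ≤ μ * infDist z K)) :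
    ∃ z, dist z x = l ∧ infDist x K + μ * l ≤ infDist z K := by
  have hcont : Continuous fun z => infDist z K - μ * dist z x :=
    (continuous_infDist_pt K).sub (by fun_prop)
  obtain ⟨z, hz, hmax⟩ := (isCompact_closedBall x l).exists_isMaxOn
    ⟨x, mem_closedBall_self hl⟩ hcont.continuousOn
  have h0 := hmax (mem_closedBall_self hl)
  simp only [Set.mem_ofPred_eq, dist_self, mul_zero, sub_zero] at h0
  rw [mem_closedBall] at hz
  rcases hz.eq_or_lt with he | hlt
  · exact ⟨z, he, by rw [he] at h0; linarith⟩
  exfalso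
  have hge : infDist x K ≤ infDist z K := by nlinarith [dist_nonneg (x := z) (y := x)]
  have hle : infDist z K ≤ infDist x K + l := by
    have := infDist_le_infDist_add_dist (s := K) (x := z) (y := x); linarith
  have hzK : z ∉ K := fun hh => by
    have := infDist_zero_of_mem hh; linarith
  have hc := hcrit z hzK ⟨hge, hle⟩
  push Not at hc
  obtain ⟨p, hp, hpd⟩ := hKc.exists_infDist_eq_dist hKne z
  obtain ⟨u, hu, hsep⟩ := aux_sep {q ∈ K | dist z q = infDist z K} ⟨p, hp, hpd.symm⟩ z _
    (mul_nonneg hμ0.le infDist_nonneg) hc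
  obtain ⟨t, ht0, htη, hinc⟩ := aux_incr μ hμ0 hμ1 K hKne hKc z u hu hsep (l - dist z x)
    (by linarith)
  have htri : dist (z + t • u) x ≤ dist z x + t := by
    have := dist_triangle (z + t • u) z x
    have h3 : dist (z + t • u) z = t := by
      simp [norm_smul, hu, abs_of_pos ht0]
    linarith
  have h4 := hmax (show z + t • u ∈ closedBall x l by rw [mem_closedBall]; linarith)
  simp only [Set.mem_ofPred_eq] at h4
  nlinarith

lemma aux_cone {E : Type*} [NormedAddCommGroup E] [InnerProductSpace ℝ E]
    [FiniteDimensional ℝ E] (S : Set E) (hS : IsCompact S) (hne : S.Nonempty) (x : E) (r : ℝ)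
    (hr : S ⊆ closedBall x r) (w : E) (hw : ∀ y ∈ S, 0 < inner ℝ (y - x) w) :
    ∃ w : E, ‖w‖ = 1 ∧ ∃ β ∈ Set.Ico (0 : ℝ) (π / 2),
      S.Nonempty ∧ S ⊆ {y : E | ∃ t ∈ Set.Icc (0 : ℝ) r, ∃ v : E, ‖v‖ = 1 ∧
          InnerProductGeometry.angle v w ≤ β ∧ y = x + t • v} := by
  have hy0 : ∀ y ∈ S, y - x ≠ 0 := fun y hy h0 => by
    have := hw y hy; rw [h0, inner_zero_left] at this; exact lt_irrefl _ this
  have hw0 : w ≠ 0 := fun h0 => by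
    obtain ⟨y, hy⟩ := hne
    have := hw y hy; rw [h0, inner_zero_right] at this; exact lt_irrefl _ this
  have hwpos : 0 < ‖w‖⁻¹ := inv_pos.2 (norm_pos_iff.2 hw0)
  have hcont : ContinuousOn (fun y => angle (y - x) w) S := by
    intro y hy
    have h1 : ContinuousAt (fun y : E × E => angle y.1 y.2) (y - x, w) :=
      continuousAt_angle (hy0 y hy) hw0
    have h2 : ContinuousAt (fun y => (y - x, w)) y := by fun_prop
    exact (ContinuousAt.comp (f := fun y => (y - x, w)) h1 h2).continuousWithinAt
  obtain ⟨y0, hy0S, hmax⟩ := hS.exists_isMaxOn hne hcont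
  refine ⟨‖w‖⁻¹ • w, ?_, angle (y0 - x) w, ⟨angle_nonneg _ _, ?_⟩, hne, ?_⟩
  · rw [norm_smul, norm_inv, norm_norm, inv_mul_cancel₀ (norm_ne_zero_iff.2 hw0)]
  · exact Real.arccos_lt_pi_div_two.2 (div_pos (hw y0 hy0S)
      (mul_pos (norm_pos_iff.2 (hy0 y0 hy0S)) (norm_pos_iff.2 hw0)))
  · intro y hy
    have hn := norm_pos_iff.2 (hy0 y hy)
    refine ⟨‖y - x‖, ⟨norm_nonneg _, ?_⟩, ‖y - x‖⁻¹ • (y - x), ?_, ?_, ?_⟩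
    · rw [← dist_eq_norm]; exact hr hy
    · rw [norm_smul, norm_inv, norm_norm, inv_mul_cancel₀ hn.ne']
    · rw [angle_smul_right_of_pos _ _ hwpos, angle_smul_left_of_pos _ _ (inv_pos.2 hn)]
      exact hmax hy
    · rw [smul_smul, mul_inv_cancel₀ hn.ne', one_smul]; abel

/-- Local spanning-cone lemma (nonnegative curvature / Euclidean case): absence of μ-critical
points of `d_K` in the annulus `[d_K(x), d_K(x) + 2(r − d_K(x) + δ)/μ]`, together with
`δ ≤ d_K(x) − r(4−μ²)/(4+μ²)`, gives an acute `r`-spanning cone for `K_δ` from `x`. -/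
theorem stmt10 {E : Type*} [NormedAddCommGroup E] [InnerProductSpace ℝ E]
    [FiniteDimensional ℝ E]
    (μ : ℝ) (hμ : μ ∈ Set.Ioo (0 : ℝ) 1) (δ r : ℝ) (hδ : 0 < δ) (hδr : δ < r)
    (K : Set E) (hKne : K.Nonempty) (hKc : IsCompact K)
    (x : E) (hx1 : infDist x K ≤ r + δ)
    (hx2 : δ ≤ infDist x K - r * (4 - μ ^ 2) / (4 + μ ^ 2))
    (hcrit : ∀ z : E, z ∉ K →
      infDist z K ∈ Set.Icc (infDist x K) (infDist x K + 2 * (r - infDist x K + δ) / μ) →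
      ¬ (infDist z (convexHull ℝ {q ∈ K | dist z q = infDist z K}) ≤ μ * infDist z K)) :
    ∃ w : E, ‖w‖ = 1 ∧ ∃ β ∈ Set.Ico (0 : ℝ) (π / 2),
      ({y : E | infDist y K ≤ δ} ∩ closedBall x r).Nonempty ∧
      {y : E | infDist y K ≤ δ} ∩ closedBall x r ⊆
        {y : E | ∃ t ∈ Set.Icc (0 : ℝ) r, ∃ v : E, ‖v‖ = 1 ∧
          InnerProductGeometry.angle v w ≤ β ∧ y = x + t • v} := by
  obtain ⟨hμ0, hμ1⟩ := hμ
  have hr : 0 < r := hδ.trans hδr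
  set d := infDist x K with hd
  have hrad : r - d + δ ≤ 2 * r * μ ^ 2 / (4 + μ ^ 2) := by
    have h4 : (0:ℝ) < 4 + μ ^ 2 := by positivity
    have : 2 * r * μ ^ 2 / (4 + μ ^ 2) = r - r * (4 - μ ^ 2) / (4 + μ ^ 2) := by
      field_simp; ring
    linarith
  have hdδ : δ < d := by
    have : 0 < r * (4 - μ ^ 2) / (4 + μ ^ 2) := by
      apply div_pos (mul_pos hr (by nlinarith)) (by positivity)
    linarith
  have hdpos : 0 < d := hδ.trans hdδ
  have hScomp : IsCompact ({y : E | infDist y K ≤ δ} ∩ closedBall x r) :=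
    (isCompact_closedBall x r).inter_left
      (isClosed_le (continuous_infDist_pt K) continuous_const)
  obtain ⟨p, hp, hpd⟩ := hKc.exists_infDist_eq_dist hKne x
  have hSne : ({y : E | infDist y K ≤ δ} ∩ closedBall x r).Nonempty := by
    refine ⟨AffineMap.lineMap x p ((d - δ) / d), ?_, ?_⟩
    · refine (infDist_le_dist_of_mem hp).trans ?_
      rw [dist_lineMap_right, ← hpd, ← hd]
      have : 1 - (d - δ) / d = δ / d := by field_simp; ring
      rw [this, Real.norm_of_nonneg (by positivity)]
      exact (div_mul_cancel₀ δ hdpos.ne').le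
    · rw [mem_closedBall, dist_lineMap_left, ← hpd, ← hd,
        Real.norm_of_nonneg (div_nonneg (by linarith) hdpos.le), div_mul_cancel₀ _ hdpos.ne']
      linarith
  suffices h : ∃ w : E, ∀ y ∈ {y : E | infDist y K ≤ δ} ∩ closedBall x r,
      0 < inner ℝ (y - x) w by
    obtain ⟨w, hw⟩ := h
    exact aux_cone _ hScomp hSne x r Set.inter_subset_right w hw
  rcases (show 0 ≤ r - d + δ by linarith).eq_or_lt with he | hpos
  · have hxK : x ∉ K := fun hh => by
      have := infDist_zero_of_mem hh; linarith
    have hc := hcrit x hxK ⟨le_rfl, by rw [← he]; simp [hd]⟩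
    push Not at hc
    obtain ⟨u, hu, hsep⟩ := aux_sep {q ∈ K | dist x q = infDist x K} ⟨p, hp, hpd.symm⟩ x _
      (mul_nonneg hμ0.le hdpos.le) hc
    refine ⟨-u, fun y hy => ?_⟩
    obtain ⟨hy1, hy2⟩ := hy
    obtain ⟨q, hq, hqd⟩ := hKc.exists_infDist_eq_dist hKne y
    rw [Set.mem_ofPred_eq, hqd] at hy1
    rw [mem_closedBall, dist_comm] at hy2
    have h1 : d ≤ dist x q := infDist_le_dist_of_mem hq
    have h2 := dist_triangle x y q
    have h3 : dist x q = d := by linarith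
    have h4 : dist x y + dist y q = dist x q := by linarith
    have hxy : dist x y = r := by linarith
    obtain ⟨s, hs, hsy⟩ := dist_add_dist_eq_iff.1 h4
    have hs0 : s ≠ 0 := by
      rintro rfl
      simp only [AffineMap.lineMap_apply_zero] at hsy
      rw [← hsy, dist_self] at hxy
      linarith
    have hs0' : 0 < s := lt_of_le_of_ne hs.1 hs0.symm
    have h5 := hsep q ⟨hq, h3⟩
    have h6 : y - x = (-s) • (x - q) := by
      rw [← hsy, AffineMap.lineMap_apply]
      simp [← smul_neg]
    rw [h6, inner_neg_right, inner_smul_left]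
    have : 0 < inner ℝ (x - q) u := lt_trans (mul_pos hμ0 hdpos) h5
    simp only [conj_trivial]
    nlinarith
  · obtain ⟨z, hz, hzd⟩ := aux_far μ hμ0 hμ1 K hKne hKc x hdpos (2 * (r - d + δ) / μ)
      (by positivity) hcrit
    refine ⟨x - z, fun y hy => ?_⟩
    obtain ⟨hy1, hy2⟩ := hy
    rw [Set.mem_ofPred_eq] at hy1
    rw [mem_closedBall, dist_eq_norm] at hy2
    rw [mul_div_cancel₀ _ hμ0.ne'] at hzd
    have h1 : infDist z K ≤ infDist y K + dist z y := infDist_le_infDist_add_dist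
    have h2 : r + (r - d + δ) ≤ ‖(y - x) + (x - z)‖ := by
      rw [sub_add_sub_cancel, ← dist_eq_norm, dist_comm]; linarith
    have h3 := norm_add_sq_real (y - x) (x - z)
    rw [dist_comm, dist_eq_norm] at hz
    rw [hz] at h3
    generalize r - d + δ = e at *
    have h4 : (r + e) ^ 2 ≤ ‖(y - x) + (x - z)‖ ^ 2 := by gcongr
    have h5 : ‖y - x‖ ^ 2 ≤ r ^ 2 := by gcongr
    have h6 : (2 * e / μ) ^ 2 < 2 * r * e + e ^ 2 := by
      rw [le_div_iff₀ (by positivity)] at hrad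
      rw [div_pow, div_lt_iff₀ (by positivity)]
      nlinarith [mul_le_mul_of_nonneg_left hrad hpos.le, mul_pos (mul_pos hpos hpos) (pow_pos hμ0 2)]
    nlinarith
end

section
/- Let E be a finite-dimensional real inner product space, μ ∈ (0,1), r > 0, 0 ≤ a, r ≤ b, and let A, S ⊆ E be nonempty compact sets; set δ = hausdorffDist S A. Suppose no point x ∉ A with d_A(x) ∈ [a, b] is a μ-critical point of d_A, and suppose δ ≤ min(r − a, μ(b − r)/(4 − μ)) and δ < μ²r/(4 + μ²). Then the offsets S_r and A_{r−δ} are homotopy equivalent (as topological subspaces of E). -/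
open Metric

section helpers

open Topology

variable {E : Type*} [NormedAddCommGroup E] [InnerProductSpace ℝ E]

lemma aux_dir [FiniteDimensional ℝ E] (G : Set E) (hG : G.Nonempty) (x : E) :
    ∃ u : E, ‖u‖ = infDist x (convexHull ℝ G) ∧ ∀ q ∈ G, ‖u‖ ^ 2 ≤ inner ℝ u (x - q) := by
  have hne : (closure (convexHull ℝ G)).Nonempty := (hG.convexHull (𝕜 := ℝ)).closure
  have hcv : Convex ℝ (closure (convexHull ℝ G)) := (convex_convexHull ℝ G).closure
  obtain ⟨m, hm, hme⟩ := exists_norm_eq_iInf_of_complete_convex hne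
    isClosed_closure.isComplete hcv x
  refine ⟨x - m, ?_, ?_⟩
  · rw [← infDist_closure, infDist_eq_iInf, hme]
    simp [dist_eq_norm]
  · intro q hq
    have h := (norm_eq_iInf_iff_real_inner_le_zero hcv hm).1 hme q
      (subset_closure (subset_convexHull ℝ G hq))
    have h2 : inner ℝ (x - m) (x - q) = ‖x - m‖ ^ 2 - inner ℝ (x - m) (q - m) := by
      rw [← real_inner_self_eq_norm_sq, ← inner_sub_right]
      congr 1; abel
    linarith

lemma aux_gap (K : Set E) (hK : IsCompact K) (x : E) (g : E → ℝ) (hg : Continuous g) (c : ℝ)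
    (h : ∀ q ∈ K, dist x q = infDist x K → c < g q) :
    ∃ η > 0, ∀ q ∈ K, dist x q < infDist x K + η → c < g q := by
  rcases (K ∩ {q | g q ≤ c}).eq_empty_or_nonempty with he | hne
  · refine ⟨1, one_pos, fun q hq _ => ?_⟩
    by_contra hc
    have : q ∈ K ∩ {q | g q ≤ c} := ⟨hq, not_lt.1 hc⟩
    rw [he] at this
    exact this
  · have hcp : IsCompact (K ∩ {q | g q ≤ c}) := hK.inter_right (isClosed_le hg continuous_const)
    obtain ⟨q0, hq0, hmin⟩ := hcp.exists_isMinOn hne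
      (f := fun q => dist x q) (by fun_prop)
    have hlt : infDist x K < dist x q0 := by
      refine lt_of_le_of_ne (infDist_le_dist_of_mem hq0.1) fun he => ?_
      exact absurd (h q0 hq0.1 he.symm) (not_lt.2 hq0.2)
    refine ⟨dist x q0 - infDist x K, by linarith, fun q hq hd => ?_⟩
    by_contra hc
    have h3 := hmin (show q ∈ K ∩ {q | g q ≤ c} from ⟨hq, not_lt.1 hc⟩)
    simp only [Set.mem_ofPred_eq] at h3
    linarith

lemma aux_nearest (K : Set E) (hK : IsCompact K) (hne : K.Nonempty) (x : E) :
    ∃ q ∈ K, dist x q = infDist x K := by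
  obtain ⟨q, hq, h⟩ := hK.exists_infDist_eq_dist hne x
  exact ⟨q, hq, h.symm⟩

/-- local ascent direction at a non-critical point -/
lemma aux_ascent_s13 [FiniteDimensional ℝ E] (A : Set E) (hA : IsCompact A) (hne : A.Nonempty)
    (μ : ℝ) (hμ0 : 0 < μ) (y : E) (hy : 0 < infDist y A)
    (hc : ¬ (infDist y (convexHull ℝ {q ∈ A | dist y q = infDist y A}) ≤ μ * infDist y A)) :
    ∃ v : E, ‖v‖ = 1 ∧ ∃ ν, μ < ν ∧ ∃ t0 > 0, ∀ t, 0 < t → t < t0 →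
      infDist y A + ν * t ≤ infDist (y + t • v) A := by
  set d := infDist y A with hd
  obtain ⟨q1, hq1, hq1d⟩ := aux_nearest A hA hne y
  obtain ⟨u, hu, huq⟩ := aux_dir {q ∈ A | dist y q = d} ⟨q1, hq1, hq1d⟩ y
  rw [← hu] at hc
  push Not at hc
  have hu0 : 0 < ‖u‖ := lt_trans (by positivity) hc
  obtain ⟨ν, hν1, hν2⟩ : ∃ ν, μ < ν ∧ ν < ‖u‖ / d :=
    exists_between ((lt_div_iff₀ hy).2 hc)
  rw [lt_div_iff₀ hy] at hν2
  set v := ‖u‖⁻¹ • u with hv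
  have hv1 : ‖v‖ = 1 := by
    rw [hv, norm_smul, norm_inv, norm_norm, inv_mul_cancel₀ hu0.ne']
  have hvq : ∀ q ∈ A, dist y q = d → ν * d < inner ℝ v (y - q) := by
    intro q hq hqd
    have := huq q ⟨hq, hqd⟩
    rw [hv, real_inner_smul_left]
    refine lt_of_lt_of_le hν2 ?_
    rw [inv_mul_eq_div, le_div_iff₀ hu0]
    nlinarith
  have hνle : ν ≤ 1 := by
    have h1 := hvq q1 hq1 hq1d
    have h2 := real_inner_le_norm v (y - q1)
    rw [← dist_eq_norm, hq1d, hv1] at h2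
    by_contra hcon
    push Not at hcon
    nlinarith
  obtain ⟨η, hη, hgap⟩ := aux_gap A hA y (fun q => inner ℝ v (y - q)) (by fun_prop) (ν * d) hvq
  refine ⟨v, hv1, ν, hν1, η / 2, by positivity, fun t ht htη => ?_⟩
  rw [le_infDist hne]
  intro q hq
  by_cases hcase : dist y q < d + η
  · have h1 := hgap q hq hcase
    have h2 : d ≤ ‖y - q‖ := by rw [← dist_eq_norm]; exact infDist_le_dist_of_mem hq
    have h3 : dist (y + t • v) q ^ 2 = ‖y - q‖ ^ 2 + 2 * t * inner ℝ v (y - q) + t ^ 2 := by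
      rw [dist_eq_norm, show y + t • v - q = (y - q) + t • v by abel, norm_add_sq_real,
        real_inner_smul_right, norm_smul, hv1, real_inner_comm, Real.norm_eq_abs, mul_one, sq_abs]
      ring
    have h4 : (d + ν * t) ^ 2 ≤ dist (y + t • v) q ^ 2 := by
      rw [h3]
      have h5 : d ^ 2 ≤ ‖y - q‖ ^ 2 := by gcongr
      have h6 : ν * d * t ≤ inner ℝ v (y - q) * t := by gcongr
      have h7 : ν ^ 2 * t ^ 2 ≤ t ^ 2 := by
        have : ν ^ 2 ≤ 1 := by nlinarith
        nlinarith [sq_nonneg t]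
      nlinarith
    exact le_of_sq_le_sq h4 dist_nonneg
  · push Not at hcase
    have h1 : dist y q ≤ dist y (y + t • v) + dist (y + t • v) q := dist_triangle _ _ _
    have h2 : dist y (y + t • v) = t := by
      rw [dist_eq_norm, show y - (y + t • v) = -(t • v) by abel, norm_neg, norm_smul, hv1,
        Real.norm_eq_abs, abs_of_pos ht, mul_one]
    nlinarith

/-- Ekeland-type ascent. -/
lemma aux_ekeland [FiniteDimensional ℝ E] (A : Set E) (hA : IsCompact A) (hne : A.Nonempty)
    (μ : ℝ) (hμ0 : 0 < μ) (a b : ℝ)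
    (hcrit : ∀ x : E, x ∉ A → infDist x A ∈ Set.Icc a b →
      ¬ (infDist x (convexHull ℝ {q ∈ A | dist x q = infDist x A}) ≤ μ * infDist x A))
    (x : E) (hx : 0 < infDist x A) (hxa : a ≤ infDist x A) (s : ℝ) (hs : 0 ≤ s) :
    ∃ y, dist y x ≤ s ∧ infDist x A + μ * dist y x ≤ infDist y A ∧
      (dist y x = s ∨ b < infDist y A) := by
  obtain ⟨y, hy, hmax⟩ := (isCompact_closedBall x s).exists_isMaxOn
    ⟨x, mem_closedBall_self hs⟩ (f := fun y => infDist y A - μ * dist y x)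
    (by have := continuous_infDist_pt A; fun_prop)
  have h1 := hmax (mem_closedBall_self hs)
  simp only [Set.mem_ofPred_eq, dist_self, mul_zero, sub_zero] at h1
  rw [mem_closedBall] at hy
  have hpos : 0 ≤ μ * dist y x := by positivity
  refine ⟨y, hy, by linarith, ?_⟩
  by_contra hcon
  push Not at hcon
  obtain ⟨hc1, hc2⟩ := hcon
  have hlt : dist y x < s := lt_of_le_of_ne hy hc1
  have hy0 : 0 < infDist y A := by linarith
  have hyA : y ∉ A := fun h => by rw [infDist_zero_of_mem h] at hy0; exact lt_irrefl _ hy0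
  obtain ⟨v, hv, ν, hν, t0, ht0, H⟩ := aux_ascent_s13 A hA hne μ hμ0 y hy0
    (hcrit y hyA ⟨by linarith, hc2⟩)
  obtain ⟨t, ht, htm⟩ := exists_between (lt_min ht0 (sub_pos.2 hlt))
  have h2 := H t ht (lt_of_lt_of_le htm (min_le_left _ _))
  have h3 : t < s - dist y x := lt_of_lt_of_le htm (min_le_right _ _)
  have h4 : dist (y + t • v) x ≤ t + dist y x := by
    refine (dist_triangle _ y _).trans ?_
    have : dist (y + t • v) y = t := by
      rw [dist_eq_norm, add_sub_cancel_left, norm_smul, hv, Real.norm_eq_abs, abs_of_pos ht,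
        mul_one]
    rw [this]
  have h5 := hmax (show y + t • v ∈ closedBall x s by rw [mem_closedBall]; linarith)
  simp only [Set.mem_ofPred_eq] at h5
  nlinarith

lemma aux_hull (G : Set E) (hG : IsCompact G) (hne : G.Nonempty) (x y : E)
    (hx : infDist x (convexHull ℝ G) = 0) :
    ∃ q ∈ G, dist y q ^ 2 ≤ dist x q ^ 2 + dist y x ^ 2 := by
  obtain ⟨q, hq, hmax⟩ := hG.exists_isMaxOn hne
    (f := fun q => (inner ℝ (y - x) (q - x) : ℝ)) (by fun_prop)
  have hxc : x ∈ closure (convexHull ℝ G) :=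
    (mem_closure_iff_infDist_zero (hne.convexHull (𝕜 := ℝ))).2 hx
  have hcl : IsClosed {w : E | (inner ℝ (y - x) w : ℝ) ≤ inner ℝ (y - x) q} :=
    isClosed_le (by fun_prop) continuous_const
  have hcv : Convex ℝ {w : E | (inner ℝ (y - x) w : ℝ) ≤ inner ℝ (y - x) q} :=
    convex_halfSpace_le (innerₛₗ ℝ (y - x)).isLinear _
  have hsub : closure (convexHull ℝ G) ⊆ {w : E | (inner ℝ (y - x) w : ℝ) ≤ inner ℝ (y - x) q} := by
    refine closure_minimal (convexHull_min ?_ hcv) hcl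
    intro w hw
    have := hmax hw
    simp only [Set.mem_ofPred_eq, inner_sub_right] at this ⊢
    linarith
  have h0 := hsub hxc
  simp only [Set.mem_ofPred_eq] at h0
  refine ⟨q, hq, ?_⟩
  have h1 : dist y q ^ 2 = dist y x ^ 2 - 2 * inner ℝ (y - x) (q - x) + dist x q ^ 2 := by
    rw [dist_eq_norm, dist_eq_norm, dist_comm, dist_eq_norm,
      show y - q = (y - x) - (q - x) by abel, norm_sub_sq_real]
  rw [inner_sub_right] at h1
  linarith

/-- local constancy of admissible directions -/
lemma aux_local (K : Set E) (hK : IsCompact K) (x v : E)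
    (h : ∀ q ∈ K, dist x q = infDist x K → 2 ≤ inner ℝ v (x - q)) :
    ∀ᶠ z in 𝓝 x, ∀ q ∈ K, dist z q = infDist z K → 1 ≤ inner ℝ v (z - q) := by
  obtain ⟨η, hη, hgap⟩ := aux_gap K hK x (fun q => inner ℝ v (x - q)) (by fun_prop) (3/2)
    (fun q hq hd => by have := h q hq hd; linarith)
  have e1 : ∀ᶠ z in 𝓝 x, dist z x < η / 2 := ball_mem_nhds x (by positivity)
  have e2 : ∀ᶠ z in 𝓝 x, -(1/2 : ℝ) < inner ℝ v (z - x) := by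
    have : Continuous fun z => (inner ℝ v (z - x) : ℝ) := by fun_prop
    exact this.continuousAt.eventually (lt_mem_nhds (by simp))
  filter_upwards [e1, e2] with z h1 h2 q hq hd
  have h3 : dist x q ≤ dist x z + dist z q := dist_triangle _ _ _
  have h4 : infDist z K ≤ infDist x K + dist z x := infDist_le_infDist_add_dist
  rw [dist_comm x z] at h3
  have h5 := hgap q hq (by linarith)
  have h6 : (inner ℝ v (z - q) : ℝ) = inner ℝ v (z - x) + inner ℝ v (x - q) := by
    rw [← inner_add_right]; congr 1; abel
  linarith

lemma aux_step_s13 (K : Set E) (hK : IsCompact K) (hne : K.Nonempty) (z V : E) (M t : ℝ)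
    (h : ∀ q ∈ K, dist z q = infDist z K → 1 ≤ inner ℝ V (z - q)) (hM : ‖V‖ ≤ M)
    (ht : 0 ≤ t) (htM : t * M ^ 2 ≤ 1) :
    infDist (z - t • V) K ^ 2 ≤ infDist z K ^ 2 - t := by
  obtain ⟨q, hq, hd⟩ := aux_nearest K hK hne z
  have h1 := h q hq hd
  have h2 : infDist (z - t • V) K ^ 2 ≤ dist (z - t • V) q ^ 2 :=
    pow_le_pow_left₀ infDist_nonneg (infDist_le_dist_of_mem hq) 2
  have h3 : dist (z - t • V) q ^ 2 = dist z q ^ 2 - 2 * t * inner ℝ V (z - q) + t ^ 2 * ‖V‖ ^ 2 := by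
    rw [dist_eq_norm, dist_eq_norm, show z - t • V - q = (z - q) - t • V by abel, norm_sub_sq_real,
        real_inner_smul_right, norm_smul, real_inner_comm, Real.norm_eq_abs, mul_pow, sq_abs]
    ring
  have h4 : ‖V‖ ^ 2 ≤ M ^ 2 := pow_le_pow_left₀ (norm_nonneg _) hM 2
  have h5 : t * ‖V‖ ^ 2 ≤ 1 := (mul_le_mul_of_nonneg_left h4 ht).trans htM
  have h6 : t ^ 2 * ‖V‖ ^ 2 ≤ t := by nlinarith
  have h7 : t ≤ t * inner ℝ V (z - q) := by nlinarith
  rw [hd] at h3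
  linarith

lemma aux_top (P Q : Set E) (hQP : Q ⊆ P) (W : E → E) (hW : Continuous W)
    (h : ∀ z ∈ P, ∀ t : ℝ, 0 ≤ t → t ≤ 1 → z - t • W z ∈ P) (hQ : ∀ z ∈ Q, W z = 0) (n : ℕ)
    (hn : ∀ z ∈ P, (fun z => z - W z)^[n] z ∈ Q) :
    Nonempty (ContinuousMap.HomotopyEquiv P Q) := by
  have h1 : ∀ z ∈ P, z - W z ∈ P := fun z hz => by
    simpa using h z hz 1 zero_le_one le_rfl
  let Φ : C(P, P) := ⟨fun z => ⟨z.1 - W z.1, h1 z.1 z.2⟩, by fun_prop⟩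
  have hΦ : (ContinuousMap.id P).Homotopic Φ := by
    refine ⟨⟨⟨fun p => ⟨p.2.1 - (p.1 : ℝ) • W p.2.1, h _ p.2.2 _ p.1.2.1 p.1.2.2⟩, ?_⟩, ?_, ?_⟩⟩
    · fun_prop
    · intro x; ext; simp
    · intro x; ext; simp [Φ]
  have hit : ∀ m : ℕ, ∃ Ψ : C(P, P), Ψ.Homotopic (ContinuousMap.id P) ∧
      ∀ z : P, (Ψ z : E) = (fun z => z - W z)^[m] z := by
    intro m
    induction m with
    | zero => exact ⟨ContinuousMap.id P, ContinuousMap.Homotopic.refl _, fun z => rfl⟩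
    | succ m ih =>
      obtain ⟨Ψ, h2, h3⟩ := ih
      refine ⟨Φ.comp Ψ, ?_, fun z => ?_⟩
      · have := ContinuousMap.Homotopic.comp hΦ.symm h2
        simpa using this
      · rw [Function.iterate_succ_apply', ← h3]
        rfl
  obtain ⟨Ψ, h2, h3⟩ := hit n
  let f : C(P, Q) := ⟨fun z => ⟨(Ψ z : E), by rw [h3]; exact hn z z.2⟩, by fun_prop⟩
  let i : C(Q, P) := ⟨fun z => ⟨z.1, hQP z.2⟩, by fun_prop⟩
  refine ⟨⟨f, i, ?_, ?_⟩⟩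
  · have : i.comp f = Ψ := by ext z; rfl
    rw [this]; exact h2
  · have : f.comp i = ContinuousMap.id Q := by
      ext z
      change (Ψ ⟨z.1, hQP z.2⟩ : E) = z.1
      rw [h3]
      refine Function.iterate_fixed ?_ n
      simp [hQ z.1 z.2]
    rw [this]

/-- the main flow lemma -/
lemma aux_flow [FiniteDimensional ℝ E] (A S : Set E) (hA : IsCompact A) (hAne : A.Nonempty)
    (hS : IsCompact S) (hSne : S.Nonempty) (r ρ : ℝ) (hρ : 0 < ρ)
    (hsub : ∀ x, infDist x A ≤ ρ → infDist x S ≤ r)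
    (hreg : ∀ x, infDist x S ≤ r → ρ ≤ infDist x A →
      infDist x (convexHull ℝ ({q ∈ A | dist x q = infDist x A} ∪
        {q ∈ S | dist x q = infDist x S})) ≠ 0) :
    Nonempty (ContinuousMap.HomotopyEquiv
      ({x : E | infDist x S ≤ r} : Set E) ({x : E | infDist x A ≤ ρ} : Set E)) := by
  have cA := continuous_infDist_pt A
  have cS := continuous_infDist_pt S
  have hPc : IsCompact {x : E | infDist x S ≤ r} := by
    obtain ⟨R, hR⟩ := hS.isBounded.subset_closedBall (0 : E)
    refine (isCompact_closedBall (0 : E) (r + R)).of_isClosed_subset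
      (isClosed_le cS continuous_const) fun x hx => ?_
    obtain ⟨q, hq, hqd⟩ := aux_nearest S hS hSne x
    have h1 := mem_closedBall.1 (hR hq)
    have h2 : infDist x S ≤ r := hx
    have h3 := dist_triangle x q 0
    rw [mem_closedBall]
    linarith
  set P := {x : E | infDist x S ≤ r} with hP
  set K := P ∩ {x : E | ρ ≤ infDist x A} with hKdef
  have hKc : IsCompact K := hPc.inter_right (isClosed_le continuous_const cA)
  obtain ⟨V, hV⟩ : ∃ V : C(E, E), ∀ z, V z ∈ {v : E | z ∈ K →
      (∀ q ∈ A, dist z q = infDist z A → 1 ≤ inner ℝ v (z - q)) ∧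
      (∀ q ∈ S, dist z q = infDist z S → 1 ≤ inner ℝ v (z - q))} := by
    apply exists_continuous_forall_mem_convex_of_local_const
    · intro z v hv w hw α β hα hβ hαβ hz
      obtain ⟨v1, v2⟩ := hv hz
      obtain ⟨w1, w2⟩ := hw hz
      constructor
      · intro q hq hd
        have e1 := v1 q hq hd
        have e2 := w1 q hq hd
        rw [inner_add_left, real_inner_smul_left, real_inner_smul_left]
        nlinarith
      · intro q hq hd
        have e1 := v2 q hq hd
        have e2 := w2 q hq hd
        rw [inner_add_left, real_inner_smul_left, real_inner_smul_left]
        nlinarith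
    · intro x
      by_cases hx : x ∈ K
      · obtain ⟨q0, hq0, hq0d⟩ := aux_nearest A hA hAne x
        obtain ⟨u, hu, huq⟩ := aux_dir ({q ∈ A | dist x q = infDist x A} ∪
          {q ∈ S | dist x q = infDist x S}) ⟨q0, Or.inl ⟨hq0, hq0d⟩⟩ x
        have hne := hreg x hx.1 hx.2
        rw [← hu] at hne
        have hup : 0 < ‖u‖ := lt_of_le_of_ne (norm_nonneg _) (Ne.symm hne)
        have key : ∀ q ∈ ({q ∈ A | dist x q = infDist x A} ∪ {q ∈ S | dist x q = infDist x S}),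
            2 ≤ inner ℝ ((2 / ‖u‖ ^ 2) • u) (x - q) := by
          intro q hq
          have := huq q hq
          rw [real_inner_smul_left, div_mul_eq_mul_div, le_div_iff₀ (by positivity)]
          linarith
        refine ⟨(2 / ‖u‖ ^ 2) • u, ?_⟩
        filter_upwards [aux_local A hA x _ fun q hq hd => key q (Or.inl ⟨hq, hd⟩),
          aux_local S hS x _ fun q hq hd => key q (Or.inr ⟨hq, hd⟩)] with z h1 h2 _
        exact ⟨h1, h2⟩
      · refine ⟨0, ?_⟩
        filter_upwards [hKc.isClosed.isOpen_compl.mem_nhds hx] with z hz hzK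
        exact absurd hzK hz
  obtain ⟨M0, hM0⟩ := hKc.exists_bound_of_continuousOn V.continuous.continuousOn
  set M := max M0 1 with hM
  have hM1 : 1 ≤ M := le_max_right _ _
  have hMV : ∀ z ∈ K, ‖V z‖ ≤ M := fun z hz => (hM0 z hz).trans (le_max_left _ _)
  set t0 : ℝ := 1 / M ^ 2 with ht0
  have ht0p : 0 < t0 := by positivity
  have ht0M : t0 * M ^ 2 = 1 := by rw [ht0]; field_simp
  set τ : E → ℝ := fun z => min t0 (max 0 (infDist z A ^ 2 - ρ ^ 2)) with hτ
  have hτc : Continuous τ := by fun_prop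
  have hτ0 : ∀ z, 0 ≤ τ z := fun z => le_min ht0p.le (le_max_left _ _)
  have hτt : ∀ z, τ z ≤ t0 := fun z => min_le_left _ _
  have hτQ : ∀ z, infDist z A ≤ ρ → τ z = 0 := by
    intro z hz
    have : infDist z A ^ 2 ≤ ρ ^ 2 := pow_le_pow_left₀ infDist_nonneg hz 2
    simp only [hτ]
    rw [max_eq_left (by linarith), min_eq_right ht0p.le]
  have hstep : ∀ z ∈ P, ∀ t : ℝ, 0 ≤ t → t ≤ 1 → z - t • (τ z • V z) ∈ P := by
    intro z hz t h0 h1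
    rcases le_total (infDist z A) ρ with hle | hge
    · simpa [hτQ z hle] using hz
    · have hzK : z ∈ K := ⟨hz, hge⟩
      have htτ : t * τ z ≤ t0 := (mul_le_of_le_one_left (hτ0 z) h1).trans (hτt z)
      have htτ0 : 0 ≤ t * τ z := mul_nonneg h0 (hτ0 z)
      have := aux_step_s13 S hS hSne z (V z) M (t * τ z) (hV z hzK).2 (hMV z hzK) htτ0
        (by rw [← ht0M]; gcongr)
      rw [smul_smul]
      have hz' : infDist z S ≤ r := hz
      change infDist _ S ≤ r
      refine le_trans ?_ hz'
      exact le_of_sq_le_sq (by linarith) infDist_nonneg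
  have hdec : ∀ z ∈ P, infDist (z - τ z • V z) A ^ 2 ≤ max (ρ ^ 2) (infDist z A ^ 2 - t0) := by
    intro z hz
    rcases le_total (infDist z A) ρ with hle | hge
    · rw [hτQ z hle, zero_smul, sub_zero]
      exact le_max_of_le_left (pow_le_pow_left₀ infDist_nonneg hle 2)
    · have hzK : z ∈ K := ⟨hz, hge⟩
      have := aux_step_s13 A hA hAne z (V z) M (τ z) (hV z hzK).1 (hMV z hzK) (hτ0 z)
        (by rw [← ht0M]; gcongr; exact hτt z)
      refine this.trans ?_
      have h2 : ρ ^ 2 ≤ infDist z A ^ 2 := pow_le_pow_left₀ hρ.le hge 2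
      simp only [hτ]
      rw [max_eq_right (a := (0 : ℝ)) (by linarith)]
      rcases le_total t0 (infDist z A ^ 2 - ρ ^ 2) with h3 | h3
      · rw [min_eq_left h3]; exact le_max_right _ _
      · rw [min_eq_right h3]; exact le_max_of_le_left (by linarith)
  have hiter : ∀ m : ℕ, ∀ z ∈ P, (fun z => z - τ z • V z)^[m] z ∈ P ∧
      infDist ((fun z => z - τ z • V z)^[m] z) A ^ 2 ≤ max (ρ ^ 2) (infDist z A ^ 2 - m * t0) := by
    intro m z hz
    induction m with
    | zero => simp [hz]
    | succ m ih =>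
      obtain ⟨h1, h2⟩ := ih
      rw [Function.iterate_succ_apply']
      set w := (fun z => z - τ z • V z)^[m] z
      refine ⟨by simpa using hstep w h1 1 zero_le_one le_rfl, (hdec w h1).trans ?_⟩
      refine max_le (le_max_left _ _) ?_
      rcases le_max_iff.1 h2 with h3 | h3
      · exact le_max_of_le_left (by linarith)
      · refine le_max_of_le_right ?_
        push_cast
        linarith
  obtain ⟨B, hB⟩ := hPc.exists_bound_of_continuousOn (f := fun z => infDist z A ^ 2)
    (by fun_prop)
  obtain ⟨n, hn⟩ := exists_nat_gt (B / t0)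
  rw [div_lt_iff₀ ht0p] at hn
  refine aux_top P _ (fun x hx => hsub x hx) (fun z => τ z • V z) (by fun_prop) hstep
    (fun z hz => by rw [hτQ z hz, zero_smul]) n fun z hz => ?_
  obtain ⟨-, h2⟩ := hiter n z hz
  have h3 := hB z hz
  rw [Real.norm_eq_abs, abs_of_nonneg (by positivity)] at h3
  rw [max_eq_left (by nlinarith)] at h2
  exact le_of_sq_le_sq h2 hρ.le

end helpers

/-- Sampling corollary (conditions on the unknown set `A`): under the stated bounds on
`δ = d_H(S,A)` and the absence of μ-critical points of `d_A` in the annulus `A_[a,b]`,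
the offsets `S_r` and `A_{r−δ}` are homotopy equivalent. -/
theorem stmt13 {E : Type*} [NormedAddCommGroup E] [InnerProductSpace ℝ E]
    [FiniteDimensional ℝ E]
    (μ : ℝ) (hμ : μ ∈ Set.Ioo (0 : ℝ) 1) (r a b : ℝ) (hr : 0 < r)
    (ha : 0 ≤ a) (hb : r ≤ b)
    (A S : Set E) (hAne : A.Nonempty) (hAc : IsCompact A)
    (hSne : S.Nonempty) (hSc : IsCompact S)
    (hcrit : ∀ x : E, x ∉ A → infDist x A ∈ Set.Icc a b →
      ¬ (infDist x (convexHull ℝ {q ∈ A | dist x q = infDist x A}) ≤ μ * infDist x A))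
    (hδ1 : hausdorffDist S A ≤ min (r - a) (μ * (b - r) / (4 - μ)))
    (hδ2 : hausdorffDist S A < μ ^ 2 * r / (4 + μ ^ 2)) :
    Nonempty (ContinuousMap.HomotopyEquiv
      ({x : E | infDist x S ≤ r} : Set E)
      ({x : E | infDist x A ≤ r - hausdorffDist S A} : Set E)) := by
  obtain ⟨hμ0, hμ1⟩ := hμ
  have hfin : hausdorffEDist S A ≠ ⊤ :=
    hausdorffEDist_ne_top_of_nonempty_of_bounded hSne hAne hSc.isBounded hAc.isBounded
  have hfin' : hausdorffEDist A S ≠ ⊤ := by rw [hausdorffEDist_comm]; exact hfin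
  have hSA : ∀ x, infDist x A ≤ infDist x S + hausdorffDist S A := fun x =>
    infDist_le_infDist_add_hausdorffDist hfin
  have hAS : ∀ x, infDist x S ≤ infDist x A + hausdorffDist S A := fun x => by
    rw [hausdorffDist_comm]; exact infDist_le_infDist_add_hausdorffDist hfin'
  rcases (hausdorffDist_nonneg (s := S) (t := A)).eq_or_lt with h0 | hpos
  · have hEq : S = A := (IsClosed.hausdorffDist_zero_iff_eq hSc.isClosed hAc.isClosed hfin).1 h0.symm
    rw [← h0, sub_zero, hEq]
    exact ⟨ContinuousMap.HomotopyEquiv.refl _⟩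
  · set δ := hausdorffDist S A with hδ
    have hδa : δ ≤ r - a := hδ1.trans (min_le_left _ _)
    have hδb : δ ≤ μ * (b - r) / (4 - μ) := hδ1.trans (min_le_right _ _)
    rw [le_div_iff₀ (by linarith)] at hδb
    rw [lt_div_iff₀ (by positivity)] at hδ2
    have hb3 : r + 3 * δ ≤ b := by
      by_contra hcon
      push Not at hcon
      nlinarith
    have hμsq : μ ^ 2 < 1 := by nlinarith
    have h4 : 4 * δ < μ ^ 2 * r := by nlinarith [mul_pos hpos (pow_pos hμ0 2)]
    have hρ : 0 < r - δ := by nlinarith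
    refine aux_flow A S hAc hAne hSc hSne r (r - δ) hρ (fun x hx => by have := hAS x; linarith) ?_
    intro x hxS hxA hzero
    obtain ⟨y, hy1, hy2, hy3⟩ := aux_ekeland A hAc hAne μ hμ0 a b hcrit x (by linarith)
      (by linarith) (4 * δ / μ) (by positivity)
    have hs2 : (4 * δ / μ) ^ 2 < 4 * δ * r := by
      rw [div_pow, div_lt_iff₀ (by positivity)]
      nlinarith
    have hyx : dist y x ^ 2 ≤ (4 * δ / μ) ^ 2 := pow_le_pow_left₀ dist_nonneg hy1 2
    have hlow : r + 3 * δ ≤ infDist y A := by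
      rcases hy3 with h | h
      · rw [h, mul_div_cancel₀ _ hμ0.ne'] at hy2
        linarith
      · linarith
    obtain ⟨q0, hq0, hq0d⟩ := aux_nearest A hAc hAne x
    have hGc : IsCompact ({q ∈ A | dist x q = infDist x A} ∪
        {q ∈ S | dist x q = infDist x S}) := by
      refine IsCompact.union ?_ ?_
      · exact hAc.inter_right (t := {q | dist x q = infDist x A})
          (isClosed_eq (by fun_prop) continuous_const)
      · exact hSc.inter_right (t := {q | dist x q = infDist x S})
          (isClosed_eq (by fun_prop) continuous_const)
    obtain ⟨q, hq, hqd⟩ := aux_hull _ hGc ⟨q0, Or.inl ⟨hq0, hq0d⟩⟩ x y hzero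
    have hxA2 : infDist x A ≤ r + δ := by have := hSA x; linarith
    rcases hq with ⟨hq, hd⟩ | ⟨hq, hd⟩
    · have e1 : infDist y A ≤ dist y q := infDist_le_dist_of_mem hq
      rw [hd] at hqd
      have e2 : infDist x A ^ 2 ≤ (r + δ) ^ 2 := pow_le_pow_left₀ infDist_nonneg hxA2 2
      have e3 : (r + 3 * δ) ^ 2 ≤ dist y q ^ 2 :=
        pow_le_pow_left₀ (by positivity) (hlow.trans e1) 2
      nlinarith [mul_pos hpos hr, mul_pos hpos hpos]
    · have e1 : infDist y S ≤ dist y q := infDist_le_dist_of_mem hq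
      rw [hd] at hqd
      have e2 : infDist x S ^ 2 ≤ r ^ 2 := pow_le_pow_left₀ infDist_nonneg hxS 2
      have e3 : (r + 2 * δ) ^ 2 ≤ dist y q ^ 2 :=
        pow_le_pow_left₀ (by positivity) (by have := hSA y; linarith) 2
      nlinarith [mul_pos hpos hr, mul_pos hpos hpos]
end

section
/- Let E be a finite-dimensional real inner product space, μ ∈ (0,1), r > 0, 0 ≤ a, r ≤ b, and let A, S ⊆ E be nonempty compact sets; set δ = hausdorffDist S A. Suppose no point x ∉ S with d_S(x) ∈ [a, b] is a μ-critical point of d_S, and suppose δ ≤ min(r − a, μ(b − r)/(4 − μ)) and δ < μ²r/(4 + μ²). Then the offsets S_r and A_r are homotopy equivalent (as topological subspaces of E). -/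
open Metric

section Aux

variable {E : Type*} [NormedAddCommGroup E] [InnerProductSpace ℝ E]

lemma aux_iter_s14 (Q : Set E) (V : E → E) (hV : Continuous V)
    (hQ : ∀ x ∈ Q, ∀ t : ℝ, 0 ≤ t → t ≤ 1 → x - t • V x ∈ Q) (n : ℕ) :
    ∃ G : C(Q, Q), ContinuousMap.Homotopic G (ContinuousMap.id Q) ∧
      ∀ x : Q, (G x : E) = (fun x => x - V x)^[n] x := by
  induction n with
  | zero => exact ⟨ContinuousMap.id Q, ContinuousMap.Homotopic.refl _, fun x => rfl⟩
  | succ n ih =>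
    obtain ⟨G, hG, hG'⟩ := ih
    let F : C(Q, Q) := ⟨fun x => ⟨(x : E) - V x, by
      have := hQ x x.2 1 zero_le_one le_rfl
      simpa using this⟩, by fun_prop⟩
    have hF : ContinuousMap.Homotopic (ContinuousMap.id Q) F := by
      refine ⟨⟨⟨fun p => ⟨(p.2 : E) - (p.1 : ℝ) • V p.2, hQ _ p.2.2 _ p.1.2.1 p.1.2.2⟩, ?_⟩, ?_, ?_⟩⟩
      · fun_prop
      · intro x; ext; simp
      · intro x; ext; simp [F]
    refine ⟨F.comp G, ?_, ?_⟩
    · have := hF.symm.comp hG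
      simpa using this
    · intro x
      rw [Function.iterate_succ_apply']
      simp [F, hG']

lemma aux_heq (P Q : Set E) (hPQ : P ⊆ Q) (V : E → E) (hV : Continuous V)
    (hQ : ∀ x ∈ Q, ∀ t : ℝ, 0 ≤ t → t ≤ 1 → x - t • V x ∈ Q)
    (hP : ∀ x ∈ P, ∀ t : ℝ, 0 ≤ t → t ≤ 1 → x - t • V x ∈ P)
    (N : ℕ) (hN : ∀ x ∈ Q, (fun x => x - V x)^[N] x ∈ P) :
    Nonempty (ContinuousMap.HomotopyEquiv P Q) := by
  obtain ⟨G, hG, hG'⟩ := aux_iter_s14 Q V hV hQ N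
  obtain ⟨K, hK, hK'⟩ := aux_iter_s14 P V hV hP N
  let i : C(P, Q) := ⟨fun x => ⟨x, hPQ x.2⟩, by fun_prop⟩
  let g : C(Q, P) := ⟨fun x => ⟨(G x : E), by rw [hG']; exact hN x x.2⟩, by fun_prop⟩
  refine ⟨⟨i, g, ?_, ?_⟩⟩
  · have : g.comp i = K := by
      ext x; simp [g, i, hG', hK']
    rw [this]; exact hK
  · have : i.comp g = G := by
      ext x; simp [g, i]
    rw [this]; exact hG

/-- `w` points away from all nearest points of `K` to `x`. -/
def GoodDir (K : Set E) (x w : E) : Prop :=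
  ∀ s ∈ K, dist x s = infDist x K → 0 < inner ℝ w (x - s)

lemma goodDir_open (K : Set E) (hK : IsCompact K) :
    IsOpen {p : E × E | GoodDir K p.1 p.2} := by
  have : CompactSpace K := isCompact_iff_compactSpace.mp hK
  have hcl : IsClosed {p : (E × E) × K | dist p.1.1 (p.2 : E) = infDist p.1.1 K ∧
      inner ℝ p.1.2 (p.1.1 - (p.2 : E)) ≤ 0} := by
    have c1 : IsClosed {p : (E × E) × K | dist p.1.1 (p.2 : E) = infDist p.1.1 K} :=
      isClosed_eq (by fun_prop) ((continuous_infDist_pt K).comp (by fun_prop))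
    have c2 : IsClosed {p : (E × E) × K | inner ℝ p.1.2 (p.1.1 - (p.2 : E)) ≤ 0} :=
      isClosed_le (by fun_prop) (by fun_prop)
    exact c1.inter c2
  have h2 := isClosedMap_fst_of_compactSpace _ hcl
  rw [← isClosed_compl_iff]
  convert h2 using 1
  ext p
  simp only [Set.mem_compl_iff, Set.mem_ofPred_eq, GoodDir, Set.mem_image]
  push Not
  constructor
  · rintro ⟨s, hs, h1, h2⟩
    exact ⟨(p, ⟨s, hs⟩), ⟨h1, h2⟩, rfl⟩
  · rintro ⟨⟨q, ⟨s, hs⟩⟩, ⟨h1, h2⟩, rfl⟩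
    exact ⟨s, hs, h1, h2⟩

lemma goodDir_convex (K : Set E) (x : E) : Convex ℝ {w | GoodDir K x w} := by
  intro u hu v hv a b ha hb hab s hs hd
  have h1 := hu s hs hd
  have h2 := hv s hs hd
  rw [inner_add_left, inner_smul_left, inner_smul_left]
  simp only [conj_trivial]
  rcases ha.eq_or_lt with rfl | ha
  · have : b = 1 := by linarith
    subst this; linarith
  · have := mul_pos ha h1
    have := mul_nonneg hb h2.le
    linarith

lemma goodDir_unif (K : Set E) (hK : IsCompact K) (hne : K.Nonempty) (Q : Set E) (hQ : IsCompact Q)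
    (V : E → E) (hV : Continuous V) (hg : ∀ x ∈ Q, GoodDir K x (V x)) (M : ℝ)
    (hM : ∀ x ∈ Q, ‖V x‖ ≤ M) :
    ∃ η > 0, ∀ x ∈ Q, ∀ t : ℝ, 0 ≤ t → t * M ^ 2 ≤ η →
      infDist (x - t • V x) K ^ 2 ≤ infDist x K ^ 2 - t * η := by
  have hc : IsCompact ((Q ×ˢ K) ∩ {p : E × E | dist p.1 p.2 = infDist p.1 K}) := by
    apply (hQ.prod hK).inter_right
    exact isClosed_eq (by fun_prop) ((continuous_infDist_pt K).comp (by fun_prop))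
  obtain ⟨η, hη, h⟩ := hc.exists_forall_le' (f := fun p : E × E => inner ℝ (V p.1) (p.1 - p.2))
    (by fun_prop) (a := 0) (by rintro ⟨x, s⟩ ⟨⟨hx, hs⟩, hd⟩; exact hg x hx s hs hd)
  refine ⟨η, hη, fun x hx t ht htM => ?_⟩
  obtain ⟨s, hs, hd⟩ := hK.exists_infDist_eq_dist hne x
  have h1 := h (x, s) ⟨⟨hx, hs⟩, hd.symm⟩
  simp only at h1
  have h2 : infDist (x - t • V x) K ≤ ‖(x - s) - t • V x‖ := by
    have := infDist_le_dist_of_mem (x := x - t • V x) hs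
    rwa [dist_eq_norm, sub_right_comm] at this
  have h3 : infDist (x - t • V x) K ^ 2 ≤ ‖(x - s) - t • V x‖ ^ 2 :=
    pow_le_pow_left₀ infDist_nonneg h2 2
  rw [norm_sub_sq_real, inner_smul_right, norm_smul, real_inner_comm, Real.norm_eq_abs, mul_pow,
    sq_abs, ← dist_eq_norm x s, ← hd] at h3
  have h4 : ‖V x‖ ^ 2 ≤ M ^ 2 := pow_le_pow_left₀ (norm_nonneg _) (hM x hx) 2
  have h5 : t * inner ℝ (V x) (x - s) ≥ t * η := mul_le_mul_of_nonneg_left h1 ht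
  have h6 : t ^ 2 * ‖V x‖ ^ 2 ≤ t * η := by
    calc t ^ 2 * ‖V x‖ ^ 2 ≤ t ^ 2 * M ^ 2 := by gcongr
      _ = t * (t * M ^ 2) := by ring
      _ ≤ t * η := by gcongr
  linarith

lemma offset_compact [FiniteDimensional ℝ E] (K : Set E) (hK : IsCompact K) (hne : K.Nonempty)
    (r : ℝ) : IsCompact {x : E | infDist x K ≤ r} := by
  have : ProperSpace E := FiniteDimensional.proper ℝ E
  apply isCompact_of_isClosed_isBounded
  · exact isClosed_le (continuous_infDist_pt K) continuous_const
  · refine (hK.isBounded.cthickening (δ := r)).subset ?_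
    intro x hx
    obtain ⟨s, hs, hd⟩ := hK.exists_infDist_eq_dist hne x
    exact mem_cthickening_of_dist_le x s r K hs (by rw [← hd]; exact hx)

lemma deform [FiniteDimensional ℝ E] (S A : Set E) (hS : IsCompact S) (hSne : S.Nonempty)
    (hA : IsCompact A) (hAne : A.Nonempty) (c r : ℝ) (hc : 0 ≤ c) (hr : 0 ≤ r)
    (hsub : ∀ x, infDist x S ≤ c → infDist x A ≤ r)
    (hgood : ∀ x, infDist x A ≤ r → c ≤ infDist x S → ∃ w, GoodDir S x w ∧ GoodDir A x w) :
    Nonempty (ContinuousMap.HomotopyEquiv ({x : E | infDist x S ≤ c} : Set E)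
      ({x : E | infDist x A ≤ r} : Set E)) := by
  have cS := continuous_infDist_pt S
  have cA := continuous_infDist_pt A
  have hAr := offset_compact A hA hAne r
  -- the field
  obtain ⟨V, hV⟩ : ∃ V : C(E, E), ∀ x, V x ∈ {w : E | (infDist x A ≤ r ∧ c ≤ infDist x S) →
      GoodDir S x w ∧ GoodDir A x w} := by
    apply exists_continuous_forall_mem_convex_of_local_const
    · intro x u hu v hv a b ha hb hab hx
      exact ⟨goodDir_convex S x (hu hx).1 (hv hx).1 ha hb hab,
        goodDir_convex A x (hu hx).2 (hv hx).2 ha hb hab⟩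
    · intro x
      by_cases hx : infDist x A ≤ r ∧ c ≤ infDist x S
      · obtain ⟨w, hw1, hw2⟩ := hgood x hx.1 hx.2
        refine ⟨w, ?_⟩
        have o1 : IsOpen {y : E | GoodDir S y w} :=
          (goodDir_open S hS).preimage (f := fun y : E => (y, w)) (by fun_prop)
        have o2 : IsOpen {y : E | GoodDir A y w} :=
          (goodDir_open A hA).preimage (f := fun y : E => (y, w)) (by fun_prop)
        filter_upwards [o1.mem_nhds hw1, o2.mem_nhds hw2] with y h1 h2 _
        exact ⟨h1, h2⟩
      · refine ⟨0, ?_⟩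
        have hcl : IsClosed {x | infDist x A ≤ r ∧ c ≤ infDist x S} :=
          (isClosed_le cA continuous_const).inter (isClosed_le continuous_const cS)
        filter_upwards [hcl.isOpen_compl.mem_nhds hx] with y hy h
        exact absurd h hy
  have cV : Continuous V := V.continuous
  have oS : IsOpen {y : E | GoodDir S y (V y)} :=
    (goodDir_open S hS).preimage (f := fun y : E => (y, V y)) (by fun_prop)
  have oA : IsOpen {y : E | GoodDir A y (V y)} :=
    (goodDir_open A hA).preimage (f := fun y : E => (y, V y)) (by fun_prop)
  -- epsilon
  obtain ⟨ε, hε, hQ⟩ : ∃ ε > 0, ∀ x, infDist x A ≤ r → c - ε ≤ infDist x S →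
      GoodDir S x (V x) ∧ GoodDir A x (V x) := by
    have hcomp : IsCompact ({x : E | infDist x A ≤ r} ∩
        ({y : E | GoodDir S y (V y)} ∩ {y : E | GoodDir A y (V y)})ᶜ) :=
      hAr.inter_right (oS.inter oA).isClosed_compl
    obtain ⟨e, he, h⟩ := hcomp.exists_forall_le' (f := fun x => c - infDist x S)
      (by fun_prop) (a := 0) (by
        rintro x ⟨h1, h2⟩
        by_contra hcon
        exact h2 (hV x ⟨h1, by linarith⟩))
    refine ⟨e / 2, by linarith, fun x hx hx' => ?_⟩
    by_contra hcon
    have := h x ⟨hx, hcon⟩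
    linarith
  set Q : Set E := {x | infDist x A ≤ r} ∩ {x | c - ε ≤ infDist x S} with hQdef
  have hQc : IsCompact Q := hAr.inter_right (isClosed_le continuous_const cS)
  obtain ⟨M, hMpos, hM⟩ : ∃ M > 0, ∀ x, infDist x A ≤ r → ‖V x‖ ≤ M := by
    obtain ⟨M, hM⟩ := hAr.exists_bound_of_continuousOn cV.continuousOn
    exact ⟨max M 1, by positivity, fun x hx => (hM x hx).trans (le_max_left _ _)⟩
  obtain ⟨D, hD⟩ := hAr.exists_bound_of_continuousOn cS.continuousOn
  obtain ⟨η₁, hη₁, hdS⟩ := goodDir_unif S hS hSne Q hQc V cV (fun x hx => (hQ x hx.1 hx.2).1) M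
    (fun x hx => hM x hx.1)
  obtain ⟨η₂, hη₂, hdA⟩ := goodDir_unif A hA hAne Q hQc V cV (fun x hx => (hQ x hx.1 hx.2).2) M
    (fun x hx => hM x hx.1)
  obtain ⟨h, hh, hh1, hh2, hh3⟩ : ∃ h > 0, h * M ^ 2 ≤ η₁ ∧ h * M ^ 2 ≤ η₂ ∧ h * M ≤ ε := by
    refine ⟨min (min (η₁ / M ^ 2) (η₂ / M ^ 2)) (ε / M), by positivity, ?_, ?_, ?_⟩
    · rw [← le_div_iff₀ (by positivity)]
      exact (min_le_left _ _).trans (min_le_left _ _)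
    · rw [← le_div_iff₀ (by positivity)]
      exact (min_le_left _ _).trans (min_le_right _ _)
    · rw [← le_div_iff₀ (by positivity)]
      exact min_le_right _ _
  -- step facts
  have stepS : ∀ x, infDist x A ≤ r → c - ε ≤ infDist x S → ∀ t, 0 ≤ t → t ≤ h →
      infDist (x - t • V x) S ^ 2 ≤ infDist x S ^ 2 - t * η₁ := fun x hx hx' t ht hth =>
    hdS x ⟨hx, hx'⟩ t ht (le_trans (by gcongr) hh1)
  have stepA : ∀ x, infDist x A ≤ r → c - ε ≤ infDist x S → ∀ t, 0 ≤ t → t ≤ h →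
      infDist (x - t • V x) A ^ 2 ≤ infDist x A ^ 2 - t * η₂ := fun x hx hx' t ht hth =>
    hdA x ⟨hx, hx'⟩ t ht (le_trans (by gcongr) hh2)
  have stepC : ∀ x, infDist x S ≤ c → ∀ t, 0 ≤ t → t ≤ h → infDist (x - t • V x) S ≤ c := by
    intro x hx t ht hth
    have hxA := hsub x hx
    by_cases hx' : c - ε ≤ infDist x S
    · have h1 := stepS x hxA hx' t ht hth
      have h2 : infDist (x - t • V x) S ^ 2 ≤ infDist x S ^ 2 := by
        have : 0 ≤ t * η₁ := by positivity
        linarith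
      exact (le_of_sq_le_sq h2 infDist_nonneg).trans hx
    · have h1 : infDist (x - t • V x) S ≤ infDist x S + dist (x - t • V x) x :=
        infDist_le_infDist_add_dist
      have h2 : dist (x - t • V x) x = t * ‖V x‖ := by
        rw [dist_eq_norm]
        simp [norm_smul, abs_of_nonneg ht]
      have h3 : t * ‖V x‖ ≤ h * M := by
        gcongr
        exact hM x hxA
      linarith
  have stepR : ∀ x, infDist x A ≤ r → ∀ t, 0 ≤ t → t ≤ h → infDist (x - t • V x) A ≤ r := by
    intro x hx t ht hth
    by_cases hx' : c - ε ≤ infDist x S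
    · have h1 := stepA x hx hx' t ht hth
      have h2 : infDist (x - t • V x) A ^ 2 ≤ infDist x A ^ 2 := by
        have : 0 ≤ t * η₂ := by positivity
        linarith
      exact (le_of_sq_le_sq h2 infDist_nonneg).trans hx
    · exact hsub _ (stepC x (by linarith) t ht hth)
  obtain ⟨N, hN⟩ := exists_nat_gt (D ^ 2 / (h * η₁))
  rw [div_lt_iff₀ (by positivity)] at hN
  have hmul : ∀ t : ℝ, 0 ≤ t → t ≤ 1 → 0 ≤ t * h ∧ t * h ≤ h := fun t h0 h1 =>
    ⟨by positivity, by nlinarith⟩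
  refine aux_heq _ _ (fun x hx => hsub x hx) (fun x => h • V x) (by fun_prop) ?_ ?_ N ?_
  · intro x hx t h0 h1
    rw [smul_smul]
    exact stepR x hx _ (hmul t h0 h1).1 (hmul t h0 h1).2
  · intro x hx t h0 h1
    rw [smul_smul]
    exact stepC x hx _ (hmul t h0 h1).1 (hmul t h0 h1).2
  · intro x hx
    have key : ∀ n : ℕ, infDist ((fun x => x - h • V x)^[n] x) A ≤ r ∧
        (infDist ((fun x => x - h • V x)^[n] x) S ≤ c ∨
          infDist ((fun x => x - h • V x)^[n] x) S ^ 2 ≤ D ^ 2 - n * (h * η₁)) := by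
      intro n
      induction n with
      | zero =>
        refine ⟨hx, Or.inr ?_⟩
        have := hD x hx
        rw [Real.norm_eq_abs, abs_of_nonneg infDist_nonneg] at this
        simpa using pow_le_pow_left₀ infDist_nonneg this 2
      | succ n ih =>
        rw [Function.iterate_succ_apply']
        set y := (fun x => x - h • V x)^[n] x
        refine ⟨stepR y ih.1 h hh.le le_rfl, ?_⟩
        by_cases hy : infDist y S ≤ c
        · exact Or.inl (stepC y hy h hh.le le_rfl)
        · right
          have h1 := ih.2.resolve_left hy
          have h2 := stepS y ih.1 (by linarith) h hh.le le_rfl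
          push_cast
          linarith
    rcases (key N).2 with h1 | h1
    · exact h1
    · have := sq_nonneg (infDist ((fun x => x - h • V x)^[N] x) S)
      linarith

/-- Ascent direction at a point that is not critical. -/
lemma ascent [FiniteDimensional ℝ E] (μ : ℝ) (hμ : μ ∈ Set.Ioo (0 : ℝ) 1) (S : Set E)
    (hS : IsCompact S) (hSne : S.Nonempty) (y : E)
    (hy : ¬ (infDist y (convexHull ℝ {q ∈ S | dist y q = infDist y S}) ≤ μ * infDist y S)) :
    ∃ v : E, ‖v‖ = 1 ∧ ∃ τ > 0, ∀ t, 0 ≤ t → t ≤ τ →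
      infDist y S + μ * t ≤ infDist (y + t • v) S := by
  have : ProperSpace E := FiniteDimensional.proper ℝ E
  obtain ⟨hμ0, hμ1⟩ := hμ
  set R := infDist y S with hR
  have hR0 : 0 ≤ R := infDist_nonneg
  set C := convexHull ℝ {q ∈ S | dist y q = R} with hC
  have hCne : C.Nonempty := by
    obtain ⟨s, hs, hd⟩ := hS.exists_infDist_eq_dist hSne y
    exact ⟨s, subset_convexHull ℝ _ ⟨hs, hd.symm⟩⟩
  have hconv : Convex ℝ (closure C) := (convex_convexHull ℝ _).closure
  obtain ⟨p, hp, hpy⟩ := exists_norm_eq_iInf_of_complete_convex hCne.closure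
    isClosed_closure.isComplete hconv y
  rw [norm_eq_iInf_iff_real_inner_le_zero hconv hp] at hpy
  have hpd : μ * R < ‖y - p‖ := by
    rw [← infDist_closure] at hy
    have := infDist_le_dist_of_mem (x := y) hp
    rw [dist_eq_norm] at this
    linarith
  have hn : 0 < ‖y - p‖ := lt_of_le_of_lt (by positivity) hpd
  set v : E := ‖y - p‖⁻¹ • (y - p) with hv
  have hv1 : ‖v‖ = 1 := by
    rw [hv, norm_smul, norm_inv, norm_norm, inv_mul_cancel₀ hn.ne']
  have hin : ∀ s ∈ S, dist y s = R → μ * R < inner ℝ v (y - s) := by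
    intro s hs hd
    have h1 := hpy s (subset_closure (subset_convexHull ℝ _ ⟨hs, hd⟩))
    have h2 : inner ℝ (y - p) (y - s) = ‖y - p‖ ^ 2 - inner ℝ (y - p) (s - p) := by
      rw [← real_inner_self_eq_norm_sq, ← inner_sub_right]; congr 1; abel
    rw [hv, inner_smul_left]
    simp only [conj_trivial]
    calc μ * R < ‖y - p‖ := hpd
      _ = ‖y - p‖⁻¹ * ‖y - p‖ ^ 2 := by field_simp
      _ ≤ _ := by gcongr; linarith
  have hcomp : IsCompact (S ∩ {s | inner ℝ v (y - s) ≤ μ * R}) :=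
    hS.inter_right (isClosed_le (by fun_prop) (by fun_prop))
  obtain ⟨R', hR', hfar⟩ := hcomp.exists_forall_le' (f := fun s => dist y s) (by fun_prop)
    (a := R) (by
      rintro s ⟨hs, h⟩
      refine lt_of_le_of_ne (infDist_le_dist_of_mem hs) ?_
      intro heq
      exact absurd (hin s hs heq.symm) (not_lt.mpr h))
  refine ⟨v, hv1, (R' - R) / 2, by linarith, fun t ht htτ => ?_⟩
  rw [le_infDist hSne]
  intro s hs
  by_cases h : inner ℝ v (y - s) ≤ μ * R
  · have h1 := hfar s ⟨hs, h⟩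
    have h2 := dist_triangle y (y + t • v) s
    have h3 : dist y (y + t • v) = t := by
      simp [norm_smul, hv1, abs_of_nonneg ht]
    have : μ * t ≤ t := by nlinarith
    linarith
  · push Not at h
    apply le_of_sq_le_sq _ dist_nonneg
    have e : y + t • v - s = (y - s) + t • v := by abel
    rw [dist_eq_norm, e, norm_add_sq_real, inner_smul_right, real_inner_comm, norm_smul, hv1,
      Real.norm_eq_abs, mul_one, sq_abs, ← dist_eq_norm]
    have h1 : R ^ 2 ≤ dist y s ^ 2 := pow_le_pow_left₀ hR0 (infDist_le_dist_of_mem hs) 2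
    have h2 : t * (μ * R) ≤ t * inner ℝ v (y - s) := by gcongr
    have h3 : (μ * t) ^ 2 ≤ t ^ 2 := by
      apply pow_le_pow_left₀ (by positivity); nlinarith
    nlinarith

lemma climb [FiniteDimensional ℝ E] (μ : ℝ) (hμ : μ ∈ Set.Ioo (0 : ℝ) 1) (S : Set E)
    (hS : IsCompact S) (hSne : S.Nonempty) (a b l : ℝ) (hl : 0 ≤ l)
    (hcrit : ∀ x : E, x ∉ S → infDist x S ∈ Set.Icc a b →
      ¬ (infDist x (convexHull ℝ {q ∈ S | dist x q = infDist x S}) ≤ μ * infDist x S))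
    (x : E) (hx0 : 0 < infDist x S) (hxa : a ≤ infDist x S) (hxb : infDist x S ≤ b) :
    ∃ y, dist y x ≤ l ∧ (infDist x S + μ * l ≤ infDist y S ∨ b ≤ infDist y S) := by
  have : ProperSpace E := FiniteDimensional.proper ℝ E
  have cS := continuous_infDist_pt S
  have hμ' := hμ
  obtain ⟨hμ0, hμ1⟩ := hμ'
  have hc : IsCompact (closedBall x l ∩
      ({y | infDist x S + μ * dist y x ≤ infDist y S} ∩ {y | infDist y S ≤ b})) :=
    (isCompact_closedBall x l).inter_right
      ((isClosed_le (by fun_prop) cS).inter (isClosed_le cS continuous_const))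
  obtain ⟨y, ⟨hy1, hy2, hy3⟩, hmax⟩ := hc.exists_isMaxOn
    ⟨x, mem_closedBall_self hl, by simp, hxb⟩ cS.continuousOn
  simp only [Set.mem_ofPred_eq, mem_closedBall] at hy1 hy2 hy3
  refine ⟨y, hy1, ?_⟩
  by_contra hcon
  push Not at hcon
  obtain ⟨h1, h2⟩ := hcon
  have hyl : dist y x < l := by
    by_contra h
    have : dist y x = l := by linarith
    rw [this] at hy2; linarith
  have hyR : infDist x S ≤ infDist y S := by
    have : 0 ≤ μ * dist y x := by positivity
    linarith
  have hyS : y ∉ S := by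
    intro h
    rw [infDist_zero_of_mem h] at hyR; linarith
  obtain ⟨v, hv, τ, hτ, hasc⟩ := ascent μ hμ S hS hSne y (hcrit y hyS ⟨by linarith, hy3⟩)
  set t := min τ (min (l - dist y x) (b - infDist y S)) with ht
  have ht0 : 0 < t := lt_min hτ (lt_min (by linarith) (by linarith))
  have ht1 : t ≤ τ := min_le_left _ _
  have ht2 : t ≤ l - dist y x := (min_le_right _ _).trans (min_le_left _ _)
  have ht3 : t ≤ b - infDist y S := (min_le_right _ _).trans (min_le_right _ _)
  have hup := hasc t ht0.le ht1
  have hdt : dist (y + t • v) y = t := by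
    simp [norm_smul, hv, abs_of_pos ht0]
  have htri := dist_triangle (y + t • v) y x
  have hlip : infDist (y + t • v) S ≤ infDist y S + dist (y + t • v) y :=
    infDist_le_infDist_add_dist
  have hle : infDist (y + t • v) S ≤ infDist y S := by
    apply hmax
    refine ⟨?_, ?_, ?_⟩
    · rw [mem_closedBall]; linarith
    · change infDist x S + μ * dist (y + t • v) x ≤ infDist (y + t • v) S
      have : μ * dist (y + t • v) x ≤ μ * (t + dist y x) := by gcongr; linarith
      linarith
    · change infDist (y + t • v) S ≤ b
      linarith
  have : 0 < μ * t := by positivity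
  linarith

lemma good_of_far (K : Set E) (x y : E) (l m : ℝ) (hd : dist y x ≤ l)
    (hfar : infDist x K + m ≤ infDist y K) (hm : 0 ≤ m)
    (hq : l ^ 2 < 2 * infDist x K * m + m ^ 2) : GoodDir K x (y - x) := by
  intro s hs hds
  have h1 : infDist x K + m ≤ dist y s := hfar.trans (infDist_le_dist_of_mem hs)
  have h2 : (infDist x K + m) ^ 2 ≤ dist y s ^ 2 :=
    pow_le_pow_left₀ (add_nonneg infDist_nonneg hm) h1 2
  have e : y - s = (y - x) + (x - s) := by abel
  rw [dist_eq_norm, e, norm_add_sq_real, ← dist_eq_norm, ← dist_eq_norm, hds] at h2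
  have h3 : dist y x ^ 2 ≤ l ^ 2 := pow_le_pow_left₀ dist_nonneg hd 2
  nlinarith

end Aux

/-- Sampling corollary (conditions on the known point cloud `S`): under the stated bounds on
`δ = d_H(S,A)` and the absence of μ-critical points of `d_S` in the annulus `S_[a,b]`,
the offsets `S_r` and `A_r` are homotopy equivalent. -/
theorem stmt14 {E : Type*} [NormedAddCommGroup E] [InnerProductSpace ℝ E]
    [FiniteDimensional ℝ E]
    (μ : ℝ) (hμ : μ ∈ Set.Ioo (0 : ℝ) 1) (r a b : ℝ) (hr : 0 < r)
    (ha : 0 ≤ a) (hb : r ≤ b)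
    (A S : Set E) (hAne : A.Nonempty) (hAc : IsCompact A)
    (hSne : S.Nonempty) (hSc : IsCompact S)
    (hcrit : ∀ x : E, x ∉ S → infDist x S ∈ Set.Icc a b →
      ¬ (infDist x (convexHull ℝ {q ∈ S | dist x q = infDist x S}) ≤ μ * infDist x S))
    (hδ1 : hausdorffDist S A ≤ min (r - a) (μ * (b - r) / (4 - μ)))
    (hδ2 : hausdorffDist S A < μ ^ 2 * r / (4 + μ ^ 2)) :
    Nonempty (ContinuousMap.HomotopyEquiv
      ({x : E | infDist x S ≤ r} : Set E)
      ({x : E | infDist x A ≤ r} : Set E)) := by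
  have hμ' := hμ
  obtain ⟨hμ0, hμ1⟩ := hμ'
  have hfin : hausdorffEDist S A ≠ ⊤ :=
    hausdorffEDist_ne_top_of_nonempty_of_bounded hSne hAne hSc.isBounded hAc.isBounded
  set δ := hausdorffDist S A with hδ
  have hδ0 : 0 ≤ δ := hausdorffDist_nonneg
  have hAS : ∀ x, infDist x A ≤ infDist x S + δ := fun x =>
    infDist_le_infDist_add_hausdorffDist hfin
  have hSA : ∀ x, infDist x S ≤ infDist x A + δ := fun x => by
    rw [hδ, hausdorffDist_comm]
    exact infDist_le_infDist_add_hausdorffDist (by rwa [hausdorffEDist_comm])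
  rcases hδ0.eq_or_lt with h0 | hδpos
  · have hEq : S = A := (hSc.isClosed.hausdorffDist_zero_iff_eq hAc.isClosed hfin).1 h0.symm
    subst hEq
    exact ⟨ContinuousMap.HomotopyEquiv.refl _⟩
  have h1 : δ ≤ r - a := hδ1.trans (min_le_left _ _)
  have h2 : δ ≤ μ * (b - r) / (4 - μ) := hδ1.trans (min_le_right _ _)
  rw [le_div_iff₀ (by linarith)] at h2
  rw [lt_div_iff₀ (by positivity)] at hδ2
  have hb3 : r + 3 * δ ≤ b := by
    have : μ * (3 * δ) ≤ μ * (b - r) := by nlinarith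
    have := le_of_mul_le_mul_left this hμ0
    linarith
  have hl2 : (4 * δ / μ) ^ 2 < 4 * δ * (r - δ) := by
    rw [div_pow, div_lt_iff₀ (by positivity)]
    nlinarith
  have hrδ : 0 < r - δ := by
    have : 0 < 4 * δ * (r - δ) := lt_of_le_of_lt (sq_nonneg _) hl2
    exact pos_of_mul_pos_right this (by positivity)
  have hclimb : ∀ x, r - δ ≤ infDist x S → infDist x S ≤ r + δ → ∃ y, dist y x ≤ 4 * δ / μ ∧
      (infDist x S + 4 * δ ≤ infDist y S ∨ r + 3 * δ ≤ infDist y S) := by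
    intro x hx1 hx2
    obtain ⟨y, hy, hy'⟩ := climb μ hμ S hSc hSne a b (4 * δ / μ) (by positivity) hcrit x
      (by linarith) (by linarith) (by linarith)
    rw [mul_div_cancel₀ _ hμ0.ne'] at hy'
    exact ⟨y, hy, hy'.imp id (fun h => hb3.trans h)⟩
  have hgS : ∀ x y, r - δ ≤ infDist x S → infDist x S ≤ r + δ → dist y x ≤ 4 * δ / μ →
      (infDist x S + 4 * δ ≤ infDist y S ∨ r + 3 * δ ≤ infDist y S) → GoodDir S x (y - x) := by
    intro x y hx1 hx2 hd hy
    refine good_of_far S x y _ (2 * δ) hd ?_ (by positivity) ?_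
    · rcases hy with hy | hy <;> linarith
    · nlinarith
  obtain ⟨e1⟩ := deform S S hSc hSne hSc hSne (r - δ) r hrδ.le hr.le (fun x hx => by linarith)
    (fun x hx hx' => by
      obtain ⟨y, hy, hy'⟩ := hclimb x hx' (by linarith)
      have := hgS x y hx' (by linarith) hy hy'
      exact ⟨y - x, this, this⟩)
  obtain ⟨e2⟩ := deform S A hSc hSne hAc hAne (r - δ) r hrδ.le hr.le
    (fun x hx => by linarith [hAS x])
    (fun x hx hx' => by
      have hx2 : infDist x S ≤ r + δ := by linarith [hSA x]
      obtain ⟨y, hy, hy'⟩ := hclimb x hx' hx2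
      refine ⟨y - x, hgS x y hx' hx2 hy hy', ?_⟩
      refine good_of_far A x y _ (2 * δ) hy ?_ (by positivity) ?_
      · have := hSA y
        have := hAS x
        rcases hy' with hy' | hy' <;> linarith
      · have := hSA x
        nlinarith)
  exact ⟨e1.symm.trans e2⟩
end

section
/- Let E be a real inner product space, let 0 < ρ < r, set c = (r+ρ)/2, and let S ⊆ E be a nonempty set with ρ ≤ ‖z‖ ≤ r for all z ∈ S. Let T = (fun z => (c/‖z‖) • z) '' S be the radial projection of S onto the sphere of radius c. Then hausdorffDist S T ≤ (r − ρ)/2. -/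
open Metric

/-- Radial-projection estimate: a set contained in the annulus `{z : ρ ≤ ‖z‖ ≤ r}` is within
Hausdorff distance `(r − ρ)/2` of its radial projection onto the sphere of radius `(r+ρ)/2`. -/
theorem stmt15 {E : Type*} [NormedAddCommGroup E] [InnerProductSpace ℝ E]
    (ρ r : ℝ) (hρ : 0 < ρ) (hρr : ρ < r)
    (S : Set E) (hSne : S.Nonempty) (hS : ∀ z ∈ S, ρ ≤ ‖z‖ ∧ ‖z‖ ≤ r) :
    hausdorffDist S ((fun z : E => ((r + ρ) / 2 / ‖z‖) • z) '' S) ≤ (r - ρ) / 2 := by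
  have key : ∀ z ∈ S, dist z (((r + ρ) / 2 / ‖z‖) • z) ≤ (r - ρ) / 2 := by
    intro z hz
    obtain ⟨h1, h2⟩ := hS z hz
    have hpos : 0 < ‖z‖ := lt_of_lt_of_le hρ h1
    have e : z - ((r + ρ) / 2 / ‖z‖) • z = (1 - (r + ρ) / 2 / ‖z‖) • z := by
      rw [sub_smul, one_smul]
    have e2 : |1 - (r + ρ) / 2 / ‖z‖| * ‖z‖ = |‖z‖ - (r + ρ) / 2| := by
      conv_lhs => rw [← abs_of_pos hpos, ← abs_mul, abs_of_pos hpos]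
      congr 1
      field_simp
    rw [dist_eq_norm, e, norm_smul, Real.norm_eq_abs, e2, abs_le]
    constructor <;> linarith
  apply hausdorffDist_le_of_mem_dist (by linarith)
  · intro z hz
    exact ⟨_, ⟨z, hz, rfl⟩, key z hz⟩
  · rintro _ ⟨z, hz, rfl⟩
    exact ⟨z, hz, by rw [dist_comm]; exact key z hz⟩
end

section
/- Let E be a real inner product space, let S ⊆ E be a set with 0 ∉ S, and let c > 0. If 0 ∈ convexHull ℝ S, then 0 ∈ convexHull ℝ ((fun z => (c/‖z‖) • z) '' S). -/
/-- If `0` lies in the convex hull of a set `S` not containing `0`, then `0` also lies in the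
convex hull of the radial projection of `S` onto the sphere of radius `c`. -/
theorem stmt16 {E : Type*} [NormedAddCommGroup E] [InnerProductSpace ℝ E]
    (S : Set E) (hS : (0 : E) ∉ S) (c : ℝ) (hc : 0 < c)
    (h : (0 : E) ∈ convexHull ℝ S) :
    (0 : E) ∈ convexHull ℝ ((fun z : E => (c / ‖z‖) • z) '' S) := by
  obtain ⟨ι, _, w, z, hw0, hw1, hz, hx⟩ := mem_convexHull_iff_exists_fintype.1 h
  have hn : ∀ i, 0 < ‖z i‖ := fun i => norm_pos_iff.2 fun h0 => hS (h0 ▸ hz i)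
  have hnn : ∀ i, 0 ≤ w i * ‖z i‖ := fun i => mul_nonneg (hw0 i) (hn i).le
  have hpos : 0 < ∑ i, w i * ‖z i‖ := by
    obtain ⟨i, hi, hwi⟩ : ∃ i ∈ Finset.univ, 0 < w i := by
      apply Finset.exists_lt_of_sum_lt (f := fun _ : ι => (0 : ℝ))
      simp [hw1]
    exact Finset.sum_pos' (fun i _ => hnn i) ⟨i, hi, mul_pos hwi (hn i)⟩
  have key := Finset.centerMass_mem_convexHull (R := ℝ) (s := (fun z : E => (c / ‖z‖) • z) '' S)
    Finset.univ (w := fun i => w i * ‖z i‖) (fun i _ => hnn i) hpos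
    (z := fun i => (c / ‖z i‖) • z i) (fun i _ => ⟨z i, hz i, rfl⟩)
  have hsum : ∑ i, (w i * ‖z i‖) • (c / ‖z i‖) • z i = 0 := by
    have : ∀ i, (w i * ‖z i‖) • (c / ‖z i‖) • z i = c • (w i • z i) := by
      intro i
      have := (hn i).ne'
      rw [smul_smul, smul_smul]
      congr 1
      field_simp
    simp only [this]
    rw [← Finset.smul_sum, hx, smul_zero]
  rw [Finset.centerMass, hsum, smul_zero] at key
  exact key
end

section
/- Let E be a finite-dimensional real inner product space and let S be a nonempty compact set of unit vectors in E. Then 0 ∉ convexHull ℝ S if and only if there exist a unit vector w ∈ E and β ∈ [0, π/2) such that angle(v, w) ≤ β for all v ∈ S. -/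
open Real InnerProductGeometry

theorem aux_compact_hull {E : Type*} [NormedAddCommGroup E] [InnerProductSpace ℝ E]
    [FiniteDimensional ℝ E] (S : Set E) (hSne : S.Nonempty) (hSc : IsCompact S) :
    IsCompact (convexHull ℝ S) := by
  obtain ⟨s0, hs0⟩ := hSne
  let n := Module.finrank ℝ E + 1
  let K : Set ((Fin n → ℝ) × (Fin n → E)) :=
    stdSimplex ℝ (Fin n) ×ˢ Set.pi Set.univ (fun _ => S)
  have hK : IsCompact K := (isCompact_stdSimplex ℝ (Fin n)).prod (isCompact_univ_pi fun _ => hSc)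
  let F : ((Fin n → ℝ) × (Fin n → E)) → E := fun p => ∑ i, p.1 i • p.2 i
  have hF : Continuous F := by fun_prop
  have : convexHull ℝ S = F '' K := by
    apply Set.Subset.antisymm
    · intro x hx
      obtain ⟨ι, _, z, w, hz, hai, hw, hw1, hx⟩ := eq_pos_convex_span_of_mem_convexHull hx
      have hcard : Fintype.card ι ≤ Fintype.card (Fin n) := by
        rw [Fintype.card_fin]
        exact hai.card_le_finrank_succ.trans (Nat.succ_le_succ (Submodule.finrank_le _))
      obtain ⟨e⟩ := Function.Embedding.nonempty_of_card_le hcard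
      have hw' : ∑ i, Function.extend e w 0 i = 1 := by
        rw [← hw1]
        symm
        apply Fintype.sum_of_injective e e.injective
        · intro i hi
          rw [Function.extend_apply' _ _ _ (by simpa using hi)]; rfl
        · intro i; rw [e.injective.extend_apply]
      refine ⟨(Function.extend e w 0, Function.extend e z (fun _ => s0)), ⟨⟨?_, hw'⟩, ?_⟩, ?_⟩
      · intro i
        by_cases h : ∃ a, e a = i
        · obtain ⟨a, rfl⟩ := h
          simp only [e.injective.extend_apply]
          exact (hw a).le
        · simp only [Function.extend_apply' _ _ _ h]; exact le_rfl
      · intro i _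
        by_cases h : ∃ a, e a = i
        · obtain ⟨a, rfl⟩ := h
          simp only [e.injective.extend_apply]
          exact hz ⟨a, rfl⟩
        · simp only [Function.extend_apply' _ _ _ h]; exact hs0
      · rw [← hx]
        symm
        apply Fintype.sum_of_injective e e.injective
        · intro i hi
          simp only [Function.extend_apply' w _ _ (show ¬ ∃ a, e a = i by simpa using hi)]
          simp
        · intro i; simp only [e.injective.extend_apply]
    · rintro _ ⟨⟨w, z⟩, ⟨⟨hw, hw1⟩, hz⟩, rfl⟩
      exact (convex_convexHull ℝ S).sum_mem (fun i _ => hw i) hw1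
        (fun i _ => subset_convexHull ℝ S (hz i trivial))
  rw [this]
  exact hK.image hF

/-- For a nonempty compact set `S` of unit vectors, `0 ∉ convexHull ℝ S` if and only if `S`
is contained in some acute cone: there are a unit vector `w` and `β ∈ [0, π/2)` with
`angle(v, w) ≤ β` for all `v ∈ S`. -/
theorem stmt17 {E : Type*} [NormedAddCommGroup E] [InnerProductSpace ℝ E]
    [FiniteDimensional ℝ E]
    (S : Set E) (hSne : S.Nonempty) (hSc : IsCompact S) (hS : ∀ v ∈ S, ‖v‖ = 1) :
    (0 : E) ∉ convexHull ℝ S ↔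
      ∃ w : E, ‖w‖ = 1 ∧ ∃ β ∈ Set.Ico (0 : ℝ) (π / 2),
        ∀ v ∈ S, InnerProductGeometry.angle v w ≤ β := by
  constructor
  · intro h0
    have hc := convex_convexHull ℝ S
    obtain ⟨p, hp, hmin⟩ := exists_norm_eq_iInf_of_complete_convex (hSne.convexHull (𝕜 := ℝ))
      (aux_compact_hull S hSne hSc).isComplete hc 0
    rw [norm_eq_iInf_iff_real_inner_le_zero hc hp] at hmin
    have hp0 : 0 < ‖p‖ := norm_pos_iff.2 (by rintro rfl; exact h0 hp)
    refine ⟨‖p‖⁻¹ • p, by simp [norm_smul, hp0.ne'], arccos ‖p‖,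
      ⟨arccos_nonneg _, arccos_lt_pi_div_two.2 hp0⟩, fun v hv => ?_⟩
    rw [angle_smul_right_of_pos _ _ (inv_pos.2 hp0)]
    apply arccos_le_arccos
    have := hmin v (subset_convexHull ℝ S hv)
    rw [zero_sub, inner_neg_left, inner_sub_right, real_inner_self_eq_norm_sq,
      real_inner_comm] at this
    rw [hS v hv, one_mul, le_div_iff₀ hp0]
    nlinarith
  · rintro ⟨w, hw, β, ⟨-, hβ⟩, h⟩ h0
    have hsub : convexHull ℝ S ⊆ {x | 0 < inner ℝ w x} := by
      apply convexHull_min _ (convex_halfSpace_gt (innerₛₗ ℝ w).isLinear 0)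
      intro v hv
      have := (h v hv).trans_lt hβ
      rw [InnerProductGeometry.angle, arccos_lt_pi_div_two, hS v hv, hw] at this
      simpa [real_inner_comm] using this
    simpa using hsub h0
end

section
/- Let E be a finite-dimensional real inner product space, K ⊆ E a nonempty compact set, x ∈ E, and 0 < a < d_K(x). Let K_a = {y ∈ E : d_K(y) ≤ a} be the a-offset (a nonempty compact set). Then d_{K_a}(x) = d_K(x) − a, and for every μ ∈ [0,1], x is a μ-critical point of d_{K_a} if and only if x is a μ-critical point of d_K. -/
open Metric

lemma infDist_homothety_aux {E : Type*} [NormedAddCommGroup E] [InnerProductSpace ℝ E]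
    (S : Set E) (hS : S.Nonempty) (x : E) (t : ℝ) (ht : 0 < t) :
    infDist x (AffineMap.homothety x t '' S) = t * infDist x S := by
  have hd : ∀ q, dist x (AffineMap.homothety x t q) = t * dist x q := by
    intro q
    rw [dist_center_homothety, Real.norm_of_nonneg ht.le]
  apply le_antisymm
  · rw [← div_le_iff₀' ht, le_infDist hS]
    intro y hy
    rw [div_le_iff₀' ht, ← hd]
    exact infDist_le_dist_of_mem (Set.mem_image_of_mem _ hy)
  · rw [le_infDist (hS.image _)]
    rintro _ ⟨y, hy, rfl⟩
    rw [hd]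
    exact mul_le_mul_of_nonneg_left (infDist_le_dist_of_mem hy) ht.le

/-- Passing to an offset shifts the distance function and preserves μ-criticality:
if `0 < a < d_K(x)` then `d_{K_a}(x) = d_K(x) − a`, and `x` is μ-critical for `d_{K_a}`
iff `x` is μ-critical for `d_K`. -/
theorem stmt18 {E : Type*} [NormedAddCommGroup E] [InnerProductSpace ℝ E]
    [FiniteDimensional ℝ E]
    (K : Set E) (hKne : K.Nonempty) (hKc : IsCompact K)
    (x : E) (a : ℝ) (ha : 0 < a) (hax : a < infDist x K) :
    infDist x {y : E | infDist y K ≤ a} = infDist x K - a ∧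
    ∀ μ ∈ Set.Icc (0 : ℝ) 1,
      (infDist x (convexHull ℝ {q ∈ {y : E | infDist y K ≤ a} |
          dist x q = infDist x {y : E | infDist y K ≤ a}}) ≤
        μ * infDist x {y : E | infDist y K ≤ a} ↔
      infDist x (convexHull ℝ {q ∈ K | dist x q = infDist x K}) ≤ μ * infDist x K) := by
  set d := infDist x K with hd
  have hd0 : 0 < d := ha.trans hax
  obtain ⟨t, ht⟩ : ∃ t : ℝ, t = (d - a) / d := ⟨_, rfl⟩
  have ht0 : 0 < t := ht ▸ div_pos (by linarith) hd0
  have htd : t * d = d - a := by rw [ht]; field_simp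
  have htd' : (1 - t) * d = a := by linarith
  have ht1 : 0 ≤ 1 - t := by
    by_contra h
    push Not at h
    nlinarith
  have hdx : ∀ q, dist x (AffineMap.homothety x t q) = t * dist x q := by
    intro q
    rw [dist_center_homothety, Real.norm_of_nonneg ht0.le]
  have hdq : ∀ q, dist (AffineMap.homothety x t q) q = (1 - t) * dist x q := by
    intro q
    rw [dist_homothety_self, Real.norm_of_nonneg ht1]
  have hmem : ∀ q ∈ K, dist x q = d → infDist (AffineMap.homothety x t q) K ≤ a := by
    intro q hq hxq
    refine (infDist_le_dist_of_mem hq).trans ?_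
    rw [hdq, hxq, htd']
  obtain ⟨q0, hq0, hq0d⟩ := hKc.exists_infDist_eq_dist hKne x
  have hq0d' : dist x q0 = d := hq0d.symm
  have h1 : infDist x {y : E | infDist y K ≤ a} = d - a := by
    apply le_antisymm
    · rw [← htd, ← hq0d', ← hdx]
      exact infDist_le_dist_of_mem (hmem q0 hq0 hq0d')
    · refine (le_infDist (s := {y : E | infDist y K ≤ a}) ⟨_, hmem q0 hq0 hq0d'⟩).2 ?_
      intro y hy
      have h := infDist_le_infDist_add_dist (s := K) (x := x) (y := y)
      have hy' : infDist y K ≤ a := hy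
      linarith
  refine ⟨h1, fun μ _ => ?_⟩
  rw [h1]
  have hset : {q ∈ {y : E | infDist y K ≤ a} | dist x q = d - a} =
      AffineMap.homothety x t '' {q ∈ K | dist x q = d} := by
    ext y
    constructor
    · rintro ⟨hy, hxy⟩
      obtain ⟨q, hq, hqd⟩ := hKc.exists_infDist_eq_dist hKne y
      have hy' : infDist y K ≤ a := hy
      have h2 := dist_triangle x y q
      have h3 : d ≤ dist x q := infDist_le_dist_of_mem hq
      have h4 : dist x q = d := by linarith
      refine ⟨q, ⟨hq, h4⟩, ?_⟩
      rw [AffineMap.homothety_eq_lineMap]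
      symm
      apply eq_lineMap_of_dist_eq_mul_of_dist_eq_mul
      · rw [h4, htd, hxy]
      · rw [h4, htd']
        linarith
    · rintro ⟨q, ⟨hq, hqd⟩, rfl⟩
      exact ⟨hmem q hq hqd, by rw [hdx, hqd, htd]⟩
  rw [hset, ← AffineMap.image_convexHull, infDist_homothety_aux _ _ _ _ ht0, ← htd,
    mul_left_comm, mul_le_mul_iff_right₀ ht0]
  exact (convexHull_nonempty_iff).2 ⟨q0, hq0, hq0d'⟩
end

section
/- Let E be a finite-dimensional real inner product space, K ⊆ E a nonempty compact set, r > 0, and x ∉ K with K ∩ Metric.closedBall x r nonempty. If (w, β) and (w', β') are both minimal acute r-spanning cones for K from x (each is an r-spanning cone for K from x with β < π/2 and β' < π/2, and each of β, β' is ≤ the angle of every r-spanning cone for K from x), then β = β' and w = w'. -/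
open Real Metric InnerProductGeometry

/-- Uniqueness of the minimal acute `r`-spanning cone: if `(w, β)` and `(w', β')` are both
minimal acute `r`-spanning cones for `K` from `x`, then `β = β'` and `w = w'`. -/
theorem stmt19 {E : Type*} [NormedAddCommGroup E] [InnerProductSpace ℝ E]
    [FiniteDimensional ℝ E]
    (K : Set E) (hKne : K.Nonempty) (hKc : IsCompact K)
    (r : ℝ) (hr : 0 < r) (x : E) (hx : x ∉ K)
    (hKx : (K ∩ closedBall x r).Nonempty)
    (w w' : E) (β β' : ℝ) (hw : ‖w‖ = 1) (hw' : ‖w'‖ = 1)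
    (hβ : β < π / 2) (hβ' : β' < π / 2)
    (hspan : K ∩ closedBall x r ⊆
      {y : E | ∃ t ∈ Set.Icc (0 : ℝ) r, ∃ v : E, ‖v‖ = 1 ∧
        InnerProductGeometry.angle v w ≤ β ∧ y = x + t • v})
    (hspan' : K ∩ closedBall x r ⊆
      {y : E | ∃ t ∈ Set.Icc (0 : ℝ) r, ∃ v : E, ‖v‖ = 1 ∧
        InnerProductGeometry.angle v w' ≤ β' ∧ y = x + t • v})
    (hmin : ∀ w'' : E, ∀ β'' : ℝ, ‖w''‖ = 1 →
      K ∩ closedBall x r ⊆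
        {y : E | ∃ t ∈ Set.Icc (0 : ℝ) r, ∃ v : E, ‖v‖ = 1 ∧
          InnerProductGeometry.angle v w'' ≤ β'' ∧ y = x + t • v} →
      β ≤ β'')
    (hmin' : ∀ w'' : E, ∀ β'' : ℝ, ‖w''‖ = 1 →
      K ∩ closedBall x r ⊆
        {y : E | ∃ t ∈ Set.Icc (0 : ℝ) r, ∃ v : E, ‖v‖ = 1 ∧
          InnerProductGeometry.angle v w'' ≤ β'' ∧ y = x + t • v} →
      β' ≤ β'') :
    β = β' ∧ w = w' := by
  have hββ : β = β' := le_antisymm (hmin w' β' hw' hspan') (hmin' w β hw hspan)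
  refine ⟨hββ, ?_⟩
  subst hββ
  by_contra hne
  have key : ∀ y ∈ K ∩ closedBall x r, ∃ t ∈ Set.Icc (0 : ℝ) r, ∃ v : E, ‖v‖ = 1 ∧
      y = x + t • v ∧ InnerProductGeometry.angle v w ≤ β ∧
      InnerProductGeometry.angle v w' ≤ β := by
    intro y hy
    obtain ⟨t, ht, v, hv, ha, h1⟩ := hspan hy
    obtain ⟨t', ht', v', hv', ha', h1'⟩ := hspan' hy
    refine ⟨t, ht, v, hv, h1, ha, ?_⟩
    have e : t • v = t' • v' := by
      have := h1.symm.trans h1'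
      exact add_left_cancel this
    have et : t = t' := by
      have := congrArg norm e
      rw [norm_smul, norm_smul, hv, hv', Real.norm_of_nonneg ht.1,
        Real.norm_of_nonneg ht'.1] at this
      linarith
    have ht0 : t ≠ 0 := by
      rintro rfl
      apply hx
      have : y = x := by simpa using h1
      exact this ▸ hy.1
    subst et
    have : v = v' := smul_right_injective E ht0 e
    rw [this]
    exact ha'
  have hβ0 : 0 ≤ β := by
    obtain ⟨y, hy⟩ := hKx
    obtain ⟨t, ht, v, hv, h1, ha, -⟩ := key y hy
    exact (InnerProductGeometry.angle_nonneg v w).trans ha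
  have hcos : 0 < Real.cos β := Real.cos_pos_of_mem_Ioo ⟨by linarith [Real.pi_pos], hβ⟩
  have hin : ∀ v u : E, ‖v‖ = 1 → ‖u‖ = 1 → InnerProductGeometry.angle v u ≤ β →
      Real.cos β ≤ inner ℝ v u := by
    intro v u hv hu h
    have h2 := Real.cos_le_cos_of_nonneg_of_le_pi (InnerProductGeometry.angle_nonneg v u)
      (by linarith [Real.pi_pos]) h
    rwa [InnerProductGeometry.cos_angle, hv, hu, mul_one, div_one] at h2
  have hsum : ∀ v : E, ‖v‖ = 1 → InnerProductGeometry.angle v w ≤ β →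
      InnerProductGeometry.angle v w' ≤ β → 2 * Real.cos β ≤ inner ℝ v (w + w') := by
    intro v hv h h'
    rw [inner_add_right]
    linarith [hin v w hv hw h, hin v w' hv hw' h']
  have hm2 : ‖w + w'‖ < 2 := by
    have hp := parallelogram_law_with_norm ℝ w w'
    rw [hw, hw'] at hp
    have : 0 < ‖w - w'‖ := norm_pos_iff.2 (sub_ne_zero.2 hne)
    nlinarith [norm_nonneg (w + w')]
  have hm0 : 0 < ‖w + w'‖ := by
    obtain ⟨y, hy⟩ := hKx
    obtain ⟨t, ht, v, hv, h1, ha, ha'⟩ := key y hy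
    have h3 := hsum v hv ha ha'
    have h4 := real_inner_le_norm v (w + w')
    rw [hv, one_mul] at h4
    linarith
  set c : ℝ := 2 * Real.cos β / ‖w + w'‖ with hc
  have hcc : Real.cos β < c := by
    rw [hc, lt_div_iff₀ hm0]
    nlinarith
  have hc1 : c ≤ 1 := by
    obtain ⟨y, hy⟩ := hKx
    obtain ⟨t, ht, v, hv, h1, ha, ha'⟩ := key y hy
    have h3 := hsum v hv ha ha'
    have h4 := real_inner_le_norm v (w + w')
    rw [hv, one_mul] at h4
    rw [hc, div_le_one hm0]
    linarith
  have hlt : Real.arccos c < β := by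
    have := Real.arccos_lt_arccos (Real.neg_one_le_cos β) hcc hc1
    rwa [Real.arccos_cos hβ0 (by linarith [Real.pi_pos])] at this
  refine absurd (hmin (‖w + w'‖⁻¹ • (w + w')) (Real.arccos c) ?_ ?_) (not_le.2 hlt)
  · rw [norm_smul, norm_inv, norm_norm, inv_mul_cancel₀ hm0.ne']
  · intro y hy
    obtain ⟨t, ht, v, hv, h1, ha, ha'⟩ := key y hy
    refine ⟨t, ht, v, hv, ?_, h1⟩
    rw [InnerProductGeometry.angle_smul_right_of_pos _ _ (inv_pos.2 hm0)]
    unfold InnerProductGeometry.angle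
    apply Real.arccos_le_arccos
    rw [hv, one_mul, hc]
    exact div_le_div_of_nonneg_right (hsum v hv ha ha') hm0.le
end
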